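/- Let (𝐗,𝐝) = {(X_1,d_1),…,(X_Q,d_Q)} be smooth vector fields on a neighborhood Ω of 0 in ℝ^n, each with a ν-parameter degree, such that each X_l has finite C^m(Ω) norm for every m, and [X_l,X_k] = Σ_{i : d_i ≤ d_l+d_k coordinatewise} c^i_{l,k} X_i on Ω with coefficients c^i_{l,k} smooth on a neighborhood of the closure of Ω. Let ℱ ⊆ (𝐗,𝐝) and suppose there exist ξ_1 > 0 and a neighborhood U ⊆ Ω of 0 such that both ℱ and (𝐗,𝐝) satisfy 𝒞(x,ξ⃗_1,Ω) for all x ∈ U, and suppose at least one element of (𝐗,𝐝) is not controlled by ℱ. Then for every ε ∈ (0,1], ξ ∈ (0,1], and every neighborhood U′ ⊆ U of 0, there exist x ∈ U′ and δ ∈ [0,ξ]^ν with n₀(x,δ) := rank(δ𝐗)(x) > 0 such that either n₀(x,δ) > |ℱ|, or n₀(x,δ) ≤ |ℱ| and |det_{n₀×n₀}(δ𝐗)_ℱ(x)|_∞ < ε·|det_{n₀×n₀}(δ𝐗)(x)|_∞. -/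

import Mathlib

open MeasureTheory Metric Filter Set
open scoped ENNReal NNReal Topology

noncomputable section

namespace Zhang

/-- `ℝ^n` with the Euclidean norm. -/
abbrev Euc (n : ℕ) := EuclideanSpace ℝ (Fin n)

/-- Vector fields on `ℝ^n` (as everywhere-defined maps). -/
abbrev VF (n : ℕ) := Euc n → Euc n

/-- `ν`-parameter degrees. -/
abbrev Deg (ν : ℕ) := Fin ν → ℝ

variable {N ν n q : ℕ}

/-- Admissible multi-parameter dilation data `e = {e_1,…,e_N} ⊆ [0,∞)^ν`. -/
def AdmissibleE (e : Fin N → Fin ν → ℝ) : Prop :=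
  (∀ i μ, 0 ≤ e i μ) ∧ (∀ i, ∃ μ, e i μ ≠ 0) ∧ (∀ μ, ∃ i, e i μ ≠ 0)

/-- `δ^d = ∏_μ δ_μ^{d_μ}` (real exponents). -/
def dpow (δ d : Fin ν → ℝ) : ℝ := ∏ μ, δ μ ^ d μ

/-- The multi-parameter dilation `δ t = (δ^{e_1} t_1, …, δ^{e_N} t_N)`. -/
def dilate (e : Fin N → Fin ν → ℝ) (δ : Fin ν → ℝ) (t : Euc N) : Euc N :=
  (EuclideanSpace.equiv (Fin N) ℝ).symm fun i => dpow δ (e i) * t i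

/-- `ς^{(δ)}(t) = δ^{e_1+⋯+e_N} ς(δ t)`. -/
def scaled (e : Fin N → Fin ν → ℝ) (ς : Euc N → ℝ) (δ : Fin ν → ℝ) : Euc N → ℝ :=
  fun t => (∏ i, dpow δ (e i)) * ς (dilate e δ t)

/-- `2^k = (2^{k_1},…,2^{k_ν})`. -/
def twoPow (k : Fin ν → ℕ) : Fin ν → ℝ := fun μ => 2 ^ k μ

/-- The (global) `C^m` supremum norm of a function. -/
def CmSupNorm {E F : Type*} [NormedAddCommGroup E] [NormedSpace ℝ E]
    [NormedAddCommGroup F] [NormedSpace ℝ F] (m : ℕ) (f : E → F) : ℝ :=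
  ∑ j ∈ Finset.range (m + 1), ⨆ t, ‖iteratedFDeriv ℝ j f t‖

/-- The `C^m` supremum norm of a function on a set. -/
def CmSupNormOn {E F : Type*} [NormedAddCommGroup E] [NormedSpace ℝ E]
    [NormedAddCommGroup F] [NormedSpace ℝ F] (m : ℕ) (s : Set E) (f : E → F) : ℝ :=
  ∑ j ∈ Finset.range (m + 1), ⨆ t ∈ s, ‖iteratedFDerivWithin ℝ j f s t‖

/-- The cancellation condition: the integral of `g` in the coordinates `t_i` with
`e_i^μ ≠ 0` vanishes identically as a function of the remaining coordinates. -/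
def CancelCond (e : Fin N → Fin ν → ℝ) (μ : Fin ν) (g : Euc N → ℝ) : Prop :=
  ∀ t : Fin N → ℝ,
    haveI : DecidablePred fun i : Fin N => e i μ ≠ 0 := Classical.decPred _
    (∫ s : {i : Fin N // e i μ ≠ 0} → ℝ,
        g ((EuclideanSpace.equiv (Fin N) ℝ).symm fun i =>
          if h : e i μ ≠ 0 then s ⟨i, h⟩ else t i)) = 0

/-- Kernel data for the class `𝒦(N,e,a,ν)`: a sequence `{ς_k}_{k∈ℕ^ν}` bounded in
`C_c^∞(B^N(a))` satisfying the cancellation conditions. -/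
def IsKernelSeq (e : Fin N → Fin ν → ℝ) (a : ℝ) (ς : (Fin ν → ℕ) → Euc N → ℝ) : Prop :=
  (∀ k, ContDiff ℝ (⊤ : ℕ∞) (ς k)) ∧
  (∀ k, tsupport (ς k) ⊆ ball (0 : Euc N) a) ∧
  (∀ m, ∃ C : ℝ, ∀ k, CmSupNorm m (ς k) ≤ C) ∧
  (∀ k μ, k μ ≠ 0 → CancelCond e μ (ς k))

/-- Membership in the Fréchet space `𝒦̄(N,e,a,ν)` (closed ball support). -/
def MemKbar (e : Fin N → Fin ν → ℝ) (a : ℝ) (ς : (Fin ν → ℕ) → Euc N → ℝ) : Prop :=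
  (∀ k, ContDiff ℝ (⊤ : ℕ∞) (ς k)) ∧
  (∀ k, tsupport (ς k) ⊆ closedBall (0 : Euc N) a) ∧
  (∀ m, ∃ C : ℝ, ∀ k, CmSupNorm m (ς k) ≤ C) ∧
  (∀ k μ, k μ ≠ 0 → CancelCond e μ (ς k))

/-- The seminorm `‖{ς_k}‖_m = sup_k ‖ς_k‖_{C^m}` of `𝒦̄(N,e,a,ν)`. -/
def seqSeminorm (m : ℕ) (ς : (Fin ν → ℕ) → Euc N → ℝ) : ℝ :=
  ⨆ k, CmSupNorm m (ς k)

/-- The multi-indices `k ∈ ℕ^ν` with all coordinates `≤ M`. -/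
def trunc (ν M : ℕ) : Finset (Fin ν → ℕ) :=
  Finset.image (fun k : Fin ν → Fin (M + 1) => fun μ => (k μ : ℕ)) Finset.univ

/-- The partial-sum operators `f ↦ ψ(x) Σ_{|k|≤M} ∫ f(γ_t(x)) ς_k^{(2^k)}(t) dt`. -/
def partialOp (e : Fin N → Fin ν → ℝ) (γ : Euc N → Euc n → Euc n) (ψ : Euc n → ℝ)
    (ς : (Fin ν → ℕ) → Euc N → ℝ) (M : ℕ) (f : Euc n → ℝ) : Euc n → ℝ :=
  fun x => ψ x * ∑ k ∈ trunc ν M, ∫ t : Euc N, f (γ t x) * scaled e (ς k) (twoPow k) t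

/-- `T` is bounded on `L^p`: the partial-sum operators are bounded uniformly in `M`. -/
def OpBounded (p : ℝ) (e : Fin N → Fin ν → ℝ) (γ : Euc N → Euc n → Euc n)
    (ψ : Euc n → ℝ) (ς : (Fin ν → ℕ) → Euc N → ℝ) : Prop :=
  ∃ C : ℝ≥0, ∀ M : ℕ, ∀ f : Euc n → ℝ, ContDiff ℝ (⊤ : ℕ∞) f → HasCompactSupport f →
    eLpNorm (partialOp e γ ψ ς M f) (ENNReal.ofReal p) volume ≤
      C * eLpNorm f (ENNReal.ofReal p) volume

/-- All operators with small `ψ` and small kernels in `𝒦(N,e,a,ν)` are `L^p` bounded. -/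
def AllOpsBounded (p : ℝ) (e : Fin N → Fin ν → ℝ) (γ : Euc N → Euc n → Euc n) : Prop :=
  ∃ ε a : ℝ, 0 < ε ∧ 0 < a ∧
    ∀ ψ : Euc n → ℝ, ContDiff ℝ (⊤ : ℕ∞) ψ → HasCompactSupport ψ →
      tsupport ψ ⊆ ball (0 : Euc n) ε →
      ∀ ς : (Fin ν → ℕ) → Euc N → ℝ, IsKernelSeq e a ς → OpBounded p e γ ψ ς

/-! ### Vector fields, brackets, Carnot–Carathéodory geometry -/

/-- The Lie bracket of two vector fields. -/
def lieBracket (X Y : VF n) : VF n := fun x => fderiv ℝ Y x (X x) - fderiv ℝ X x (Y x)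

/-- `ℒ(S)`: the smallest set of (vector field, degree) pairs containing `S` and
closed under Lie brackets (adding degrees). -/
inductive LieGen (S : Set (VF n × Deg ν)) : VF n × Deg ν → Prop
  | base {P : VF n × Deg ν} : P ∈ S → LieGen S P
  | bracket {X Y : VF n} {d d' : Deg ν} : LieGen S (X, d) → LieGen S (Y, d') →
      LieGen S (lieBracket X Y, d + d')

def lieSpan (S : Set (VF n × Deg ν)) : Set (VF n × Deg ν) := {P | LieGen S P}

def unitCube (ν : ℕ) : Set (Fin ν → ℝ) := {δ | ∀ μ, 0 ≤ δ μ ∧ δ μ ≤ 1}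

def vecConst (ν : ℕ) (ξ : ℝ) : Fin ν → ℝ := fun _ => ξ

/-- `a` is a measurable control with `‖Σ_l |a_l|²‖_{L^∞[0,1]} < 1`. -/
def IsSubunit {ι : Type*} [Fintype ι] (a : ℝ → ι → ℝ) : Prop :=
  (∀ l, Measurable fun s => a s l) ∧
  ∃ c : ℝ, c < 1 ∧ ∀ᵐ s ∂(volume.restrict (Set.Icc (0 : ℝ) 1)), ∑ l, a s l ^ 2 ≤ c

/-- `g` is an absolutely continuous solution of `g' = Σ_l a_l δ^{d_l} X_l(g)`, `g(0)=x`,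
in integral form. -/
def SolvesODE {ι : Type*} [Fintype ι] (X : ι → VF n) (d : ι → Deg ν) (δ : Fin ν → ℝ)
    (a : ℝ → ι → ℝ) (x : Euc n) (g : ℝ → Euc n) : Prop :=
  g 0 = x ∧ ∀ u ∈ Set.Icc (0 : ℝ) 1,
    g u = x + ∫ s in (0 : ℝ)..u, ∑ l, a s l • dpow δ (d l) • X l (g s)

/-- The multi-parameter Carnot–Carathéodory ball `B_{(X,d)}(x,δ)` inside `Ω`. -/
def CCBall {ι : Type*} [Fintype ι] (X : ι → VF n) (d : ι → Deg ν) (Ω : Set (Euc n))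
    (x : Euc n) (δ : Fin ν → ℝ) : Set (Euc n) :=
  {y | ∃ (g : ℝ → Euc n) (a : ℝ → ι → ℝ), IsSubunit a ∧
      (∀ u ∈ Set.Icc (0 : ℝ) 1, g u ∈ Ω) ∧ SolvesODE X d δ a x g ∧ g 1 = y}

/-- `(X,d)` satisfies `𝒞(x,δ,Ω)`. -/
def SatC {ι : Type*} [Fintype ι] (X : ι → VF n) (d : ι → Deg ν) (x : Euc n)
    (δ : Fin ν → ℝ) (Ω : Set (Euc n)) : Prop :=
  ∀ a : ℝ → ι → ℝ, IsSubunit a →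
    ∃ g : ℝ → Euc n, (∀ u ∈ Set.Icc (0 : ℝ) 1, g u ∈ Ω) ∧ SolvesODE X d δ a x g

/-- The derivation of a scalar function along a vector field. -/
def derivAlong (Y : VF n) (f : Euc n → ℝ) : Euc n → ℝ := fun x => fderiv ℝ f x (Y x)

/-- `(δX)^α f`: iterated derivations indexed by the ordered multi-index `α`. -/
def derivList {ι : Type*} (X : ι → VF n) (w : ι → ℝ) (α : List ι) (f : Euc n → ℝ) :
    Euc n → ℝ :=
  α.foldr (fun l g => derivAlong (fun x => w l • X l x) g) f

/-- `(X,d)` controls `(X₀,d₀)` on `U` with parameter `ξ₁` (ambient `Ω`). -/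
def ControlsOn {ι : Type*} [Fintype ι] (X : ι → VF n) (d : ι → Deg ν)
    (Ω U : Set (Euc n)) (ξ₁ : ℝ) (X₀ : VF n) (d₀ : Deg ν) : Prop :=
  (∀ x ∈ U, SatC X d x (vecConst ν ξ₁) Ω) ∧
  ∃ c : Euc n → (Fin ν → ℝ) → ι → Euc n → ℝ,
    (∀ x ∈ U, ∀ δ ∈ unitCube ν, ∀ y ∈ CCBall X d Ω x (fun μ => ξ₁ * δ μ),
      dpow δ d₀ • X₀ y = ∑ l, c x δ l y • dpow δ (d l) • X l y) ∧
    (∀ x ∈ U, ∀ δ ∈ unitCube ν, ∀ l, ∀ α : List ι,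
      ContinuousOn (derivList X (fun l' => dpow δ (d l')) α (c x δ l))
        (CCBall X d Ω x (fun μ => ξ₁ * δ μ))) ∧
    (∀ m : ℕ, ∃ C : ℝ, ∀ x ∈ U, ∀ δ ∈ unitCube ν, ∀ l, ∀ α : List ι, α.length ≤ m →
      ∀ y ∈ CCBall X d Ω x (fun μ => ξ₁ * δ μ),
        |derivList X (fun l' => dpow δ (d l')) α (c x δ l) y| ≤ C)

/-- `(X,d)` controls `(X₀,d₀)` (some `U`, `ξ₁`), ambient `Ω`. -/
def ControlsPair {ι : Type*} [Fintype ι] (X : ι → VF n) (d : ι → Deg ν)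
    (Ω : Set (Euc n)) (X₀ : VF n) (d₀ : Deg ν) : Prop :=
  ∃ (U : Set (Euc n)) (ξ₁ : ℝ), IsOpen U ∧ (0 : Euc n) ∈ U ∧ U ⊆ Ω ∧ 0 < ξ₁ ∧
    ControlsOn X d Ω U ξ₁ X₀ d₀

/-- A finite set of pairs controls a pair (ambient neighborhood existentially quantified). -/
def FinsetControls (F : Finset (VF n × Deg ν)) (P : VF n × Deg ν) : Prop :=
  ∃ Ω : Set (Euc n), IsOpen Ω ∧ (0 : Euc n) ∈ Ω ∧
    ControlsPair (fun l : F => (l : VF n × Deg ν).1) (fun l : F => (l : VF n × Deg ν).2)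
      Ω P.1 P.2

/-- A set `S` of pairs controls a set `T`. -/
def SetControls (S T : Set (VF n × Deg ν)) : Prop :=
  ∃ F : Finset (VF n × Deg ν), ↑F ⊆ S ∧ ∀ P ∈ S ∪ T, FinsetControls F P

/-! ### Degrees, Taylor coefficients, exponential coefficients -/

def degMulti (e : Fin N → Fin ν → ℝ) (α : Fin N → ℕ) : Fin ν → ℝ :=
  fun μ => ∑ i, (α i : ℝ) * e i μ

/-- A degree is pure if it has exactly one nonzero coordinate. -/
def IsPureDeg (dg : Fin ν → ℝ) : Prop := ∃! μ, dg μ ≠ 0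

/-- `t^α`. -/
def monomial (α : Fin N → ℕ) (t : Euc N) : ℝ := ∏ i, t i ^ α i

/-- The multi-indices `α` with `|α| < M`. -/
def multiIdxLt (N M : ℕ) : Finset (Fin N → ℕ) :=
  (trunc N M).filter fun α => ∑ i, α i < M

/-- `X` is the family of Taylor coefficient vector fields of `W` at `t = 0`, on `U`. -/
def IsTaylorFieldOf (W : Euc N → Euc n → Euc n) (U : Set (Euc n))
    (X : (Fin N → ℕ) → VF n) : Prop :=
  X 0 = 0 ∧ (∀ α, ContDiffOn ℝ (⊤ : ℕ∞) (X α) U) ∧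
  ∀ M : ℕ, ∃ C ε : ℝ, 0 < ε ∧ ∀ t ∈ ball (0 : Euc N) ε, ∀ x ∈ U,
    ‖W t x - ∑ α ∈ multiIdxLt N M, monomial α t • X α x‖ ≤ C * ‖t‖ ^ M

/-- `W(t,x) = (d/dε)|_{ε=1} γ_{εt}(γ_t⁻¹(x))` on `B^N(ρ) × U`. -/
def IsWFor (γ : Euc N → Euc n → Euc n) (ρ : ℝ) (U : Set (Euc n))
    (W : Euc N → Euc n → Euc n) : Prop :=
  ∃ γinv : Euc N → Euc n → Euc n,
    (∀ t ∈ ball (0 : Euc N) ρ, ∀ x ∈ U, γ t (γinv t x) = x ∧ γinv t (γ t x) = x) ∧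
    ∀ t ∈ ball (0 : Euc N) ρ, ∀ x ∈ U,
      HasDerivAt (fun ε : ℝ => γ (ε • t) (γinv t x)) (W t x) 1

/-- `y` is the time-one flow of the vector field `V` from `x`. -/
def FlowsTo (V : VF n) (x y : Euc n) : Prop :=
  ∃ φ : ℝ → Euc n, φ 0 = x ∧ φ 1 = y ∧ ∀ s ∈ Set.Icc (0 : ℝ) 1, HasDerivAt φ (V (φ s)) s

/-- `Xh` is the family of exponential coefficient vector fields of `γ`:
`γ_t(x) = e^{Σ_{0<|α|<M} t^α X̂_α} x + O(|t|^M)` for every `M`. -/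
def IsExpFieldsFor (γ : Euc N → Euc n → Euc n) (U : Set (Euc n))
    (Xh : (Fin N → ℕ) → VF n) : Prop :=
  Xh 0 = 0 ∧ (∀ α, ContDiffOn ℝ (⊤ : ℕ∞) (Xh α) U) ∧
  ∀ M : ℕ, ∃ C ε : ℝ, 0 < ε ∧ ∀ t ∈ ball (0 : Euc N) ε, ∀ x ∈ U,
    ∃ y : Euc n, FlowsTo (fun z => ∑ α ∈ multiIdxLt N M, monomial α t • Xh α z) x y ∧
      ‖γ t x - y‖ ≤ C * ‖t‖ ^ M

/-- The pure power set `𝒫` of a family of coefficient fields. -/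
def pureSet (e : Fin N → Fin ν → ℝ) (X : (Fin N → ℕ) → VF n) : Set (VF n × Deg ν) :=
  {P | ∃ α : Fin N → ℕ, α ≠ 0 ∧ IsPureDeg (degMulti e α) ∧ P = (X α, degMulti e α)}

/-- The nonpure power set `𝒩` of a family of coefficient fields. -/
def nonpureSet (e : Fin N → Fin ν → ℝ) (X : (Fin N → ℕ) → VF n) : Set (VF n × Deg ν) :=
  {P | ∃ α : Fin N → ℕ, α ≠ 0 ∧ ¬ IsPureDeg (degMulti e α) ∧ P = (X α, degMulti e α)}

/-! ### Strong control -/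

/-- `(X,d)` strongly controls `(X₀,d₀)`. -/
def StrongControlsOn {ι : Type*} [Fintype ι] (X : ι → VF n) (d : ι → Deg ν)
    (X₀ : VF n) (d₀ : Deg ν) : Prop :=
  ∃ (U V : Set (Euc n)) (c : ι → Euc n → ℝ),
    IsOpen U ∧ (0 : Euc n) ∈ U ∧ IsOpen V ∧ closure U ⊆ V ∧
    (∀ l, ContDiffOn ℝ (⊤ : ℕ∞) (c l) V) ∧
    (∀ l, ¬ (∀ μ, d l μ ≤ d₀ μ) → c l = 0) ∧
    (∀ x ∈ U, X₀ x = ∑ l, c l x • X l x)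

/-- A finite set of pairs strongly controls a pair. -/
def FinsetStrongControls (F : Finset (VF n × Deg ν)) (P : VF n × Deg ν) : Prop :=
  StrongControlsOn (fun l : F => (l : VF n × Deg ν).1) (fun l : F => (l : VF n × Deg ν).2)
    P.1 P.2

/-- `(X,d)` strongly controls `W(t,x)`. -/
def StrongControlsW {ι : Type*} [Fintype ι] (X : ι → VF n) (d : ι → Deg ν)
    (e : Fin N → Fin ν → ℝ) (W : Euc N → Euc n → Euc n) : Prop :=
  ∃ (ρ' : ℝ) (U : Set (Euc n)) (V : Set (Euc N × Euc n)) (A : Finset (Fin N → ℕ))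
    (c : ι → (Fin N → ℕ) → Euc N → Euc n → ℝ),
    0 < ρ' ∧ IsOpen U ∧ (0 : Euc n) ∈ U ∧ IsOpen V ∧
    closure (ball (0 : Euc N) ρ' ×ˢ U) ⊆ V ∧
    (∀ l α, ContDiffOn ℝ (⊤ : ℕ∞) (fun p : Euc N × Euc n => c l α p.1 p.2) V) ∧
    (∀ l α, degMulti e α ≠ d l → c l α = 0) ∧
    (∀ t ∈ ball (0 : Euc N) ρ', ∀ x ∈ U,
      W t x = ∑ l, ∑ α ∈ A, (c l α t x * monomial α t) • X l x)

/-- A finite set of pairs strongly controls `W`. -/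
def FinsetStrongControlsW (F : Finset (VF n × Deg ν)) (e : Fin N → Fin ν → ℝ)
    (W : Euc N → Euc n → Euc n) : Prop :=
  StrongControlsW (fun l : F => (l : VF n × Deg ν).1) (fun l : F => (l : VF n × Deg ν).2)
    e W

/-! ### Control of `W` -/

/-- `∂_{t_i}` applied to a function of `(t,u)`. -/
def derivTAlong (i : Fin N) (f : Euc N → Euc n → ℝ) : Euc N → Euc n → ℝ :=
  fun t u => fderiv ℝ (fun s => f s u) t (EuclideanSpace.single i (1 : ℝ))

/-- Iterated `t`-partials indexed by an ordered multi-index. -/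
def derivTList (β : List (Fin N)) (f : Euc N → Euc n → ℝ) : Euc N → Euc n → ℝ :=
  β.foldr derivTAlong f

/-- Iterated `u`-derivations along scaled vector fields. -/
def derivUList {ι : Type*} (X : ι → VF n) (w : ι → ℝ) (β : List ι)
    (f : Euc N → Euc n → ℝ) : Euc N → Euc n → ℝ :=
  fun t => derivList X w β (f t)

/-- `(X,d)` controls `W` on `U` for `t ∈ B^N(ρ')` with parameter `ξ₁` (ambient `Ω`). -/
def ControlsWOn {ι : Type*} [Fintype ι] (X : ι → VF n) (d : ι → Deg ν)
    (e : Fin N → Fin ν → ℝ) (Ω U : Set (Euc n)) (ρ' ξ₁ : ℝ)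
    (W : Euc N → Euc n → Euc n) : Prop :=
  (∀ x ∈ U, SatC X d x (vecConst ν ξ₁) Ω) ∧
  ∃ c : Euc n → (Fin ν → ℝ) → ι → Euc N → Euc n → ℝ,
    (∀ x ∈ U, ∀ δ ∈ unitCube ν, ∀ t ∈ ball (0 : Euc N) ρ',
      ∀ u ∈ CCBall X d Ω x (fun μ => ξ₁ * δ μ),
        W (dilate e δ t) u = ∑ l, c x δ l t u • dpow δ (d l) • X l u) ∧
    (∀ x ∈ U, ∀ δ ∈ unitCube ν, ∀ l, ∀ β' : List (Fin N), ∀ β : List ι,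
      ContinuousOn
        (fun p : Euc N × Euc n =>
          derivTList β' (derivUList X (fun l' => dpow δ (d l')) β (c x δ l)) p.1 p.2)
        (ball (0 : Euc N) ρ' ×ˢ CCBall X d Ω x (fun μ => ξ₁ * δ μ))) ∧
    (∀ m : ℕ, ∃ C : ℝ, ∀ x ∈ U, ∀ δ ∈ unitCube ν, ∀ l, ∀ β' : List (Fin N), ∀ β : List ι,
      β'.length + β.length ≤ m → ∀ t ∈ ball (0 : Euc N) ρ',
        ∀ u ∈ CCBall X d Ω x (fun μ => ξ₁ * δ μ),
          |derivTList β' (derivUList X (fun l' => dpow δ (d l')) β (c x δ l)) t u| ≤ C)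

/-- `(X,d)` controls `W` (some `ρ' ≤ ρ`, `ξ₁`, `U`), ambient `Ω`. -/
def ControlsW {ι : Type*} [Fintype ι] (X : ι → VF n) (d : ι → Deg ν)
    (e : Fin N → Fin ν → ℝ) (Ω : Set (Euc n)) (ρ : ℝ)
    (W : Euc N → Euc n → Euc n) : Prop :=
  ∃ (ρ' ξ₁ : ℝ) (U : Set (Euc n)), 0 < ρ' ∧ ρ' ≤ ρ ∧ 0 < ξ₁ ∧ IsOpen U ∧
    (0 : Euc n) ∈ U ∧ U ⊆ Ω ∧ ControlsWOn X d e Ω U ρ' ξ₁ W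

end Zhang

open Zhang

/-- The matrix `δ𝐗(x)` whose `l`-th column is `δ^{d_l} X_l(x)`. -/
def scaledMat {ν n Q : ℕ} (X : Fin Q → VF n) (d : Fin Q → Deg ν) (δ : Fin ν → ℝ)
    (x : Euc n) : Matrix (Fin n) (Fin Q) ℝ :=
  fun i l => dpow δ (d l) * (X l x) i

/-- `|det_{r×r}(δ𝐗)(x)|_∞`: the largest absolute value of an `r × r` minor. -/
def maxMinor {ν n Q : ℕ} (X : Fin Q → VF n) (d : Fin Q → Deg ν) (δ : Fin ν → ℝ)
    (x : Euc n) (r : ℕ) : ℝ :=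
  ⨆ I : Fin r → Fin n, ⨆ J : Fin r → Fin Q, |((scaledMat X d δ x).submatrix I J).det|

/-- `|det_{r×r}(δ𝐗)_ℱ(x)|_∞`: minors using only columns from `F`. -/
def maxMinorSub {ν n Q : ℕ} (X : Fin Q → VF n) (d : Fin Q → Deg ν) (δ : Fin ν → ℝ)
    (x : Euc n) (F : Finset (Fin Q)) (r : ℕ) : ℝ :=
  ⨆ I : Fin r → Fin n, ⨆ J : Fin r → F,
    |((scaledMat X d δ x).submatrix I fun j => (J j : Fin Q)).det|

/-
Suppose the conclusion fails: at every point near `0` and every scale, a minor of `δ𝐗` with columns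
in `ℱ` dominates all minors of the same order, and larger minors vanish. By involutivity, the
derivative of a minor along `δ^{d_k} X_k` is a bounded linear combination of minors of the same
order: the brackets recombine columns and the Jacobian of `X_k` recombines rows. By a Grönwall
argument minors are therefore nearly constant on the balls `B(x, ξδ)` of `ℱ` for small `ξ`, so the
same minor dominates on the whole ball. Cramer's rule expresses each `δ^{d_l} X_l` there through
the fields in `ℱ`, with quotients of minors as coefficients, and iterated derivatives of these
remain in the algebra generated by smooth functions and such quotients, hence are bounded uniformly
in `x` and `δ`. So `ℱ` controls every `X_l`. Restricting the hypothesis to small scales `ξδ` costs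
only a constant, since passing from `ξδ` to `δ` multiplies the columns by comparable factors.
-/

section AbsContCurve

variable {E : Type*} [NormedAddCommGroup E] [NormedSpace ℝ E]

/-- `g` is, on `[0,1]`, an absolutely continuous curve starting at `x`, encoded as a primitive of
its integrable velocity `f`. -/
structure IsAbsContCurve (f : ℝ → E) (x : E) (g : ℝ → E) : Prop where
  intervalIntegrable : IntervalIntegrable f volume 0 1
  eq_add_integral : ∀ u ∈ Icc (0 : ℝ) 1, g u = x + ∫ s in (0 : ℝ)..u, f s

namespace IsAbsContCurve

variable {f g : ℝ → E} {x : E}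

lemma apply_zero (hg : IsAbsContCurve f x g) : g 0 = x := by
  simpa using hg.eq_add_integral 0 ⟨le_rfl, zero_le_one⟩

lemma continuousOn (hg : IsAbsContCurve f x g) : ContinuousOn g (Icc 0 1) := by
  have hprim := intervalIntegral.continuousOn_primitive_interval'
    hg.intervalIntegrable left_mem_uIcc
  rw [uIcc_of_le zero_le_one] at hprim
  exact (continuousOn_const.add hprim).congr hg.eq_add_integral

lemma sub_eq_integral (hg : IsAbsContCurve f x g) {s t : ℝ} (hs : s ∈ Icc (0 : ℝ) 1)
    (ht : t ∈ Icc (0 : ℝ) 1) : g t - g s = ∫ τ in s..t, f τ := by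
  have hint : ∀ u ∈ Icc (0 : ℝ) 1, IntervalIntegrable f volume 0 u := fun u hu =>
    hg.intervalIntegrable.mono_set (uIcc_subset_uIcc_left (by rwa [uIcc_of_le zero_le_one]))
  rw [hg.eq_add_integral t ht, hg.eq_add_integral s hs, add_sub_add_left_eq_sub,
    intervalIntegral.integral_interval_sub_left (hint t ht) (hint s hs)]

lemma dist_le (hg : IsAbsContCurve f x g) {s t : ℝ} (hs : s ∈ Icc (0 : ℝ) 1)
    (ht : t ∈ Icc (0 : ℝ) 1) {M : ℝ} (hM : ∀ᵐ τ, τ ∈ uIoc s t → ‖f τ‖ ≤ M) :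
    dist (g t) (g s) ≤ M * |t - s| := by
  rw [dist_eq_norm, hg.sub_eq_integral hs ht]
  exact intervalIntegral.norm_integral_le_of_norm_le_const_ae hM

lemma lipschitzOnWith (hg : IsAbsContCurve f x g) {M : ℝ≥0}
    (hM : ∀ᵐ s ∂volume.restrict (Icc (0 : ℝ) 1), ‖f s‖ ≤ M) :
    LipschitzOnWith M g (Icc 0 1) := by
  refine LipschitzOnWith.of_dist_le_mul fun t ht s hs => hg.dist_le hs ht ?_
  filter_upwards [(ae_restrict_iff' measurableSet_Icc).1 hM] with τ hτ hmem
  exact hτ (uIcc_subset_Icc hs ht (uIoc_subset_uIcc hmem))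

lemma ae_hasDerivAt [CompleteSpace E] (hg : IsAbsContCurve f x g) :
    ∀ᵐ s ∂volume.restrict (Icc (0 : ℝ) 1), HasDerivAt g (f s) s := by
  rw [← restrict_Ioo_eq_restrict_Icc, ae_restrict_iff' measurableSet_Ioo]
  filter_upwards [hg.intervalIntegrable.ae_hasDerivAt_integral] with s hs hs01
  have hder := (hs (by simpa using Ioo_subset_Icc_self hs01) 0 left_mem_uIcc).const_add x
  refine hder.congr_of_eventuallyEq ?_
  filter_upwards [isOpen_Ioo.mem_nhds hs01] with τ hτ
  exact hg.eq_add_integral τ (Ioo_subset_Icc_self hτ)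

lemma mapsTo_closedBall (hg : IsAbsContCurve f x g) {M ρ : ℝ} (hM0 : 0 ≤ M) (hMρ : M < ρ)
    (hM : ∀ᵐ s ∂volume.restrict (Icc (0 : ℝ) 1), g s ∈ closedBall x ρ → ‖f s‖ ≤ M) :
    MapsTo g (Icc 0 1) (closedBall x ρ) := by
  by_contra hexit
  obtain ⟨u, hu, hgu⟩ : ∃ u ∈ Icc (0 : ℝ) 1, g u ∉ closedBall x ρ := by
    simpa only [MapsTo, not_forall, exists_prop] using hexit
  let Z : Set ℝ := Icc 0 1 ∩ (fun s => dist (g s) x) ⁻¹' Ici ρ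
  have hZbdd : BddBelow Z := ⟨0, fun s hs => hs.1.1⟩
  have hZclosed : IsClosed Z :=
    ((continuous_id.dist continuous_const).comp_continuousOn
      hg.continuousOn).preimage_isClosed_of_isClosed isClosed_Icc isClosed_Ici
  have hZne : Z.Nonempty := ⟨u, hu, (not_le.1 (mt mem_closedBall.2 hgu)).le⟩
  have hv : sInf Z ∈ Z := hZclosed.csInf_mem hZne hZbdd
  set v := sInf Z
  have hbefore : ∀ s ∈ Ico 0 v, g s ∈ closedBall x ρ := fun s hs => by
    by_contra hout
    have hsZ : s ∈ Z := ⟨⟨hs.1, hs.2.le.trans hv.1.2⟩, (not_le.1 (mt mem_closedBall.2 hout)).le⟩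
    exact (csInf_le hZbdd hsZ).not_gt hs.2
  have hdist : dist (g v) (g 0) ≤ M * |v - 0| := by
    refine hg.dist_le ⟨le_rfl, zero_le_one⟩ hv.1 ?_
    have hne : ∀ᵐ s ∂(volume : Measure ℝ), s ≠ v := by simp [ae_iff]
    filter_upwards [(ae_restrict_iff' measurableSet_Icc).1 hM, hne] with s hs hsv hmem
    rw [uIoc_of_le hv.1.1] at hmem
    exact hs ⟨hmem.1.le, hmem.2.trans hv.1.2⟩ (hbefore s ⟨hmem.1.le, hmem.2.lt_of_ne hsv⟩)
  rw [hg.apply_zero, sub_zero, abs_of_nonneg hv.1.1] at hdist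
  have hρv : ρ ≤ dist (g v) x := hv.2
  exact (hρv.trans (hdist.trans (mul_le_of_le_one_right hM0 hv.1.2))).not_gt hMρ

lemma abs_comp_sub_le [CompleteSpace E] (hg : IsAbsContCurve f x g) {M : ℝ≥0}
    (hM : ∀ᵐ s ∂volume.restrict (Icc (0 : ℝ) 1), ‖f s‖ ≤ M) {Ω : Set E} (hΩ : IsOpen Ω)
    (hgΩ : MapsTo g (Icc 0 1) Ω) {φ : E → ℝ} (hφ : ContDiffOn ℝ 1 φ Ω) {B : ℝ}
    (hB : ∀ᵐ s ∂volume.restrict (Icc (0 : ℝ) 1), |fderiv ℝ φ (g s) (f s)| ≤ B)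
    {u : ℝ} (hu : u ∈ Icc (0 : ℝ) 1) : |φ (g u) - φ x| ≤ B * u := by
  have hφg : ∀ s ∈ Icc (0 : ℝ) 1, ContDiffAt ℝ 1 φ (g s) := fun s hs =>
    hφ.contDiffAt (hΩ.mem_nhds (hgΩ hs))
  obtain ⟨K, hK⟩ : ∃ K, LipschitzOnWith K φ (g '' Icc 0 1) := by
    refine LocallyLipschitzOn.exists_lipschitzOnWith_of_compact
      (isCompact_Icc.image_of_continuousOn hg.continuousOn) ?_
    rintro _ ⟨s, hs, rfl⟩
    obtain ⟨K, t, ht, hK⟩ := (hφg s hs).exists_lipschitzOnWith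
    exact ⟨K, t, mem_nhdsWithin_of_mem_nhds ht, hK⟩
  have hlip : LipschitzOnWith (K * M) (fun s => φ (g s)) (Icc 0 1) :=
    hK.comp (hg.lipschitzOnWith hM) (mapsTo_image g _)
  have hac : AbsolutelyContinuousOnInterval (fun s => φ (g s)) 0 u :=
    (hlip.mono (uIcc_subset_Icc ⟨le_rfl, zero_le_one⟩ hu)).absolutelyContinuousOnInterval
  rw [← hg.apply_zero, ← hac.integral_deriv_eq_sub, ← Real.norm_eq_abs]
  have hbound : ∀ᵐ s, s ∈ uIoc 0 u → ‖deriv (fun s => φ (g s)) s‖ ≤ B := by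
    filter_upwards [(ae_restrict_iff' measurableSet_Icc).1 (hg.ae_hasDerivAt.and hB)] with s hs hsu
    have hs01 : s ∈ Icc (0 : ℝ) 1 := by
      rw [uIoc_of_le hu.1] at hsu
      exact ⟨hsu.1.le, hsu.2.trans hu.2⟩
    have hder : HasDerivAt (fun s => φ (g s)) (fderiv ℝ φ (g s) (f s)) s :=
      ((hφg s hs01).differentiableAt one_ne_zero).hasFDerivAt.comp_hasDerivAt s (hs hs01).1
    rw [hder.deriv]
    exact (hs hs01).2
  simpa [abs_of_nonneg hu.1] using intervalIntegral.norm_integral_le_of_norm_le_const_ae hbound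

lemma abs_comp_sub_le_of_linear_bound [CompleteSpace E] (hg : IsAbsContCurve f x g) {M : ℝ≥0}
    (hM : ∀ᵐ s ∂volume.restrict (Icc (0 : ℝ) 1), ‖f s‖ ≤ M) {Ω : Set E} (hΩ : IsOpen Ω)
    (hgΩ : MapsTo g (Icc 0 1) Ω) {P : Type*} [Finite P] {v : P → E → ℝ}
    (hv : ∀ p, ContDiffOn ℝ 1 (v p) Ω) {κ : ℝ} (hκ0 : 0 ≤ κ) (hκ : κ ≤ 1 / 2)
    (hlin : ∀ᵐ s ∂volume.restrict (Icc (0 : ℝ) 1), ∀ B, (∀ p, |v p (g s)| ≤ B) →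
      ∀ p, |fderiv ℝ (v p) (g s) (f s)| ≤ κ * B)
    {S : ℝ} (hS : ∀ p, |v p x| ≤ S) (p : P) {u : ℝ} (hu : u ∈ Icc (0 : ℝ) 1) :
    |v p (g u) - v p x| ≤ 2 * κ * S := by
  let V : P × Icc (0 : ℝ) 1 → ℝ := fun q => |v q.1 (g q.2)|
  have hbdd : BddAbove (range V) := by
    have hbddp : ∀ p, ∃ C, ∀ s ∈ Icc (0 : ℝ) 1, ‖v p (g s)‖ ≤ C := fun p =>
      isCompact_Icc.exists_bound_of_continuousOn ((hv p).continuousOn.comp hg.continuousOn hgΩ)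
    choose C hC using hbddp
    obtain ⟨C', hC'⟩ := (finite_range C).bddAbove
    exact ⟨C', forall_mem_range.2 fun q => (hC q.1 q.2 q.2.2).trans (hC' ⟨q.1, rfl⟩)⟩
  set B := sSup (range V)
  have hVB : ∀ p, ∀ s ∈ Icc (0 : ℝ) 1, |v p (g s)| ≤ B := fun p s hs =>
    le_csSup hbdd ⟨(p, ⟨s, hs⟩), rfl⟩
  have hB0 : 0 ≤ B := (abs_nonneg _).trans (hVB p u hu)
  have hvar : ∀ p, ∀ s ∈ Icc (0 : ℝ) 1, |v p (g s) - v p x| ≤ κ * B := fun p s hs => by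
    have hderiv : ∀ᵐ s ∂volume.restrict (Icc (0 : ℝ) 1),
        |fderiv ℝ (v p) (g s) (f s)| ≤ κ * B := by
      filter_upwards [hlin, ae_restrict_mem measurableSet_Icc] with s hs hs01
      exact hs B (fun p => hVB p s hs01) p
    exact (hg.abs_comp_sub_le hM hΩ hgΩ (hv p) hderiv hs).trans
      (mul_le_of_le_one_right (mul_nonneg hκ0 hB0) hs.2)
  have hBS : B ≤ 2 * S := by
    have hBle : B ≤ S + κ * B := by
      refine csSup_le ⟨_, (p, ⟨u, hu⟩), rfl⟩ (forall_mem_range.2 fun q => ?_)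
      have htri : |v q.1 (g q.2)| - |v q.1 x| ≤ |v q.1 (g q.2) - v q.1 x| :=
        abs_sub_abs_le_abs_sub _ _
      linarith [hvar q.1 q.2 q.2.2, hS q.1]
    nlinarith
  calc |v p (g u) - v p x| ≤ κ * B := hvar p u hu
    _ ≤ κ * (2 * S) := mul_le_mul_of_nonneg_left hBS hκ0
    _ = 2 * κ * S := by ring

end IsAbsContCurve

end AbsContCurve

section Minors

open Matrix

variable {m n κ R : Type*} [DecidableEq κ]

lemma submatrix_update_right {κ' : Type*} (M : Matrix m n R) (I : κ' → m) (J : κ → n) (j : κ)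
    (l : n) : M.submatrix I (Function.update J j l) =
      (M.submatrix I J).updateCol j fun i => M (I i) l := by
  ext i k
  rcases eq_or_ne k j with rfl | hk
  · simp
  · simp [hk]

lemma submatrix_update_left {κ' : Type*} (M : Matrix m n R) (I : κ → m) (J : κ' → n) (i : κ)
    (k : m) : M.submatrix (Function.update I i k) J =
      (M.submatrix I J).updateRow i fun j => M k (J j) := by
  ext a j
  rcases eq_or_ne a i with rfl | ha
  · simp
  · simp [ha]

variable [Fintype κ]

section CommRing

variable [CommRing R]

lemma det_updateCol_eq_sum_adjugate_mul (A : Matrix κ κ R) (j : κ) (b : κ → R) :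
    (A.updateCol j b).det = ∑ i, A.adjugate j i * b i := by
  rw [← cramer_apply, cramer_eq_adjugate_mulVec, mulVec, dotProduct]

lemma det_updateRow_eq_sum_mul_adjugate (A : Matrix κ κ R) (i : κ) (b : κ → R) :
    (A.updateRow i b).det = ∑ j, b j * A.adjugate j i := by
  rw [← det_transpose, ← updateCol_transpose, det_updateCol_eq_sum_adjugate_mul,
    ← adjugate_transpose]
  simp only [transpose_apply, mul_comm]

lemma det_submatrix_mul_diagonal [DecidableEq n] [Fintype n] (M : Matrix m n R) (q : n → R)
    (I : κ → m) (J : κ → n) :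
    ((M * diagonal q).submatrix I J).det = (∏ j, q (J j)) * (M.submatrix I J).det := by
  rw [← det_mul_row]
  congr 1
  ext i j
  simp [mul_comm]

end CommRing

section Field

variable [Field R]

/- The bordered minor is the Schur complement of `M.submatrix I J` times its determinant; the
remaining identity is Cramer's rule. -/
lemma apply_eq_sum_of_det_bordered_eq_zero (M : Matrix m n R) (I : κ → m) (J : κ → n)
    (hdet : (M.submatrix I J).det ≠ 0) {i : m} {l : n}
    (hbordered :
      (M.submatrix (Sum.elim I fun _ : Unit => i) (Sum.elim J fun _ : Unit => l)).det = 0) :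
    M i l = ∑ j, (M.submatrix I (Function.update J j l)).det / (M.submatrix I J).det *
      M i (J j) := by
  set A := M.submatrix I J with hA
  let _ := A.invertibleOfIsUnitDet (isUnit_iff_ne_zero.2 hdet)
  have hblocks : M.submatrix (Sum.elim I fun _ : Unit => i) (Sum.elim J fun _ : Unit => l) =
      fromBlocks A (of fun k _ => M (I k) l) (of fun _ j => M i (J j)) (of fun _ _ => M i l) := by
    ext (a | a) (b | b) <;> rfl
  rw [hblocks, det_fromBlocks₁₁, mul_eq_zero, or_iff_right hdet, det_unique, Matrix.sub_apply,
    sub_eq_zero, of_apply, invOf_eq_nonsing_inv, Matrix.mul_assoc, mul_apply] at hbordered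
  rw [hbordered]
  refine Finset.sum_congr rfl fun j _ => ?_
  rw [submatrix_update_right, ← hA, det_updateCol_eq_sum_adjugate_mul, of_apply, mul_comm (M i _),
    mul_apply, inv_def, Ring.inverse_eq_inv', Finset.sum_div]
  refine congrArg (· * _) (Finset.sum_congr rfl fun k _ => ?_)
  rw [Matrix.smul_apply, smul_eq_mul, of_apply]
  ring

lemma det_submatrix_eq_zero_of_rank_lt [Fintype n] {M : Matrix m n R}
    (h : M.rank < Fintype.card κ) (I : κ → m) (J : κ → n) : (M.submatrix I J).det = 0 := by
  by_contra hdet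
  have hrank : (M.submatrix I J).rank = Fintype.card κ :=
    rank_of_isUnit _ ((isUnit_iff_isUnit_det _).2 (isUnit_iff_ne_zero.2 hdet))
  exact (hrank.symm.trans_le (M.rank_submatrix_le I J)).not_gt h

lemma exists_linearIndependent_col_submatrix [Fintype n] (M : Matrix m n R) :
    ∃ J : Fin M.rank → n, LinearIndependent R (M.submatrix id J).col := by
  obtain ⟨ι, a, ha, hspan, hli⟩ := exists_linearIndependent' R M.col
  have _ : Fintype ι := Fintype.ofInjective a ha
  have hcard : Fintype.card ι = M.rank := by
    rw [M.rank_eq_finrank_span_cols, ← hspan]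
    exact (finrank_span_eq_card hli).symm
  let e : Fin M.rank ≃ ι := (Fintype.equivFinOfCardEq hcard).symm
  exact ⟨a ∘ e, hli.comp e e.injective⟩

lemma exists_det_submatrix_ne_zero [Finite m] [Fintype n] (M : Matrix m n R) :
    ∃ (I : Fin M.rank → m) (J : Fin M.rank → n), (M.submatrix I J).det ≠ 0 := by
  have := Fintype.ofFinite m
  obtain ⟨J, hJ⟩ := exists_linearIndependent_col_submatrix M
  have hrank : (M.submatrix id J)ᵀ.rank = M.rank := by
    rw [rank_transpose, rank_eq_finrank_span_cols, finrank_span_eq_card hJ, Fintype.card_fin]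
  obtain ⟨I, hI⟩ := exists_linearIndependent_col_submatrix (M.submatrix id J)ᵀ
  let e := finCongr hrank.symm
  have hrows : LinearIndependent R (M.submatrix (I ∘ e) J).row := hI.comp e e.injective
  exact ⟨I ∘ e, J, ((isUnit_iff_isUnit_det _).1
    (linearIndependent_rows_iff_isUnit.1 hrows)).ne_zero⟩

end Field

lemma abs_det_submatrix_le_iSup [Finite m] [Finite n] (M : Matrix m n ℝ) (I : κ → m) (J : κ → n) :
    |(M.submatrix I J).det| ≤ ⨆ I : κ → m, ⨆ J : κ → n, |(M.submatrix I J).det| :=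
  (le_ciSup (f := fun J => |(M.submatrix I J).det|) (finite_range _).bddAbove J).trans
    (le_ciSup (f := fun I => ⨆ J, |(M.submatrix I J).det|) (finite_range _).bddAbove I)

lemma exists_abs_det_submatrix_eq_iSup [Finite m] [Finite n] [Nonempty (κ → m)] [Nonempty (κ → n)]
    (M : Matrix m n ℝ) : ∃ (I : κ → m) (J : κ → n),
      |(M.submatrix I J).det| = ⨆ I : κ → m, ⨆ J : κ → n, |(M.submatrix I J).det| := by
  obtain ⟨I, hI⟩ := exists_eq_ciSup_of_finite (f := fun I : κ → m =>
    ⨆ J : κ → n, |(M.submatrix I J).det|)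
  obtain ⟨J, hJ⟩ := exists_eq_ciSup_of_finite (f := fun J : κ → n => |(M.submatrix I J).det|)
  exact ⟨I, J, hJ.trans hI⟩

end Minors

section DerivativeOfMinors

open Matrix

variable {m n κ E : Type*} [Fintype κ] [DecidableEq κ] [NormedAddCommGroup E]

lemma fderiv_det_apply {𝕜 : Type*} [NontriviallyNormedField 𝕜] [NormedSpace 𝕜 E]
    {A : E → Matrix κ κ 𝕜} {y : E} (hA : ∀ i j, DifferentiableAt 𝕜 (fun z => A z i j) y) (v : E) :
    fderiv 𝕜 (fun z => (A z).det) y v =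
      ∑ i, ∑ j, fderiv 𝕜 (fun z => A z i j) y v * (A y).adjugate j i := by
  let detRows : ContinuousMultilinearMap 𝕜 (fun _ : κ => κ → 𝕜) 𝕜 :=
    { (detRowAlternating (R := 𝕜) (n := κ)).toMultilinearMap with
      cont := by
        change Continuous fun M : Matrix κ κ 𝕜 => M.det
        exact continuous_id.matrix_det }
  have hrow : ∀ i, HasFDerivAt (fun z => A z i)
      (ContinuousLinearMap.pi fun j => fderiv 𝕜 (fun z => A z i j) y) y := fun i =>
    hasFDerivAt_pi.2 fun j => (hA i j).hasFDerivAt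
  have hdet : HasFDerivAt (fun z => (A z).det) _ y := HasFDerivAt.multilinear_comp detRows hrow
  rw [hdet.fderiv]
  simp only [FunLike.coe_sum, Finset.sum_apply, ContinuousLinearMap.comp_apply]
  exact Finset.sum_congr rfl fun i _ => det_updateRow_eq_sum_mul_adjugate (A y) i _

variable [Fintype m] [Fintype n]

lemma fderiv_det_submatrix_apply {𝕜 : Type*} [NontriviallyNormedField 𝕜] [NormedSpace 𝕜 E]
    {M : E → Matrix m n 𝕜} {y v : E} (hM : ∀ i l, DifferentiableAt 𝕜 (fun z => M z i l) y)
    {W : Matrix n n 𝕜} {L : Matrix m m 𝕜}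
    (hder : ∀ i l, fderiv 𝕜 (fun z => M z i l) y v = (M y * W + L * M y) i l)
    (I : κ → m) (J : κ → n) :
    fderiv 𝕜 (fun z => ((M z).submatrix I J).det) y v =
      ∑ j, ∑ l, W l (J j) * ((M y).submatrix I (Function.update J j l)).det +
        ∑ i, ∑ k, L (I i) k * ((M y).submatrix (Function.update I i k) J).det := by
  rw [fderiv_det_apply (A := fun z => (M z).submatrix I J) fun i j => hM (I i) (J j)]
  simp only [submatrix_apply, hder, Matrix.add_apply, mul_apply, add_mul, Finset.sum_add_distrib,
    submatrix_update_right, submatrix_update_left, det_updateCol_eq_sum_adjugate_mul,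
    det_updateRow_eq_sum_mul_adjugate, Finset.mul_sum, Finset.sum_mul]
  congr 1
  · rw [Finset.sum_comm]
    refine Finset.sum_congr rfl fun j _ => ?_
    rw [Finset.sum_comm]
    exact Finset.sum_congr rfl fun l _ => Finset.sum_congr rfl fun i _ => by ring
  · refine Finset.sum_congr rfl fun i _ => ?_
    rw [Finset.sum_comm]
    exact Finset.sum_congr rfl fun k _ => Finset.sum_congr rfl fun j _ => by ring

lemma abs_fderiv_det_submatrix_apply_le [NormedSpace ℝ E] {M : E → Matrix m n ℝ} {y v : E}
    (hM : ∀ i l, DifferentiableAt ℝ (fun z => M z i l) y) {W : Matrix n n ℝ} {L : Matrix m m ℝ}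
    (hder : ∀ i l, fderiv ℝ (fun z => M z i l) y v = (M y * W + L * M y) i l) {H B : ℝ}
    (hH : 0 ≤ H) (hW : ∀ l l', |W l l'| ≤ H) (hL : ∀ i i', |L i i'| ≤ H)
    (hB : ∀ (I : κ → m) (J : κ → n), |((M y).submatrix I J).det| ≤ B) (I : κ → m) (J : κ → n) :
    |fderiv ℝ (fun z => ((M z).submatrix I J).det) y v| ≤
      Fintype.card κ * (Fintype.card n + Fintype.card m) * (H * B) := by
  rw [fderiv_det_submatrix_apply hM hder]
  have hterm : ∀ {w D : ℝ}, |w| ≤ H → |D| ≤ B → |w * D| ≤ H * B := fun hw hD => by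
    rw [abs_mul]
    exact mul_le_mul hw hD (abs_nonneg _) hH
  calc |∑ j, ∑ l, W l (J j) * ((M y).submatrix I (Function.update J j l)).det +
        ∑ i, ∑ k, L (I i) k * ((M y).submatrix (Function.update I i k) J).det|
      ≤ ∑ _j : κ, ∑ _l : n, H * B + ∑ _i : κ, ∑ _k : m, H * B := by
        refine (abs_add_le _ _).trans (add_le_add ?_ ?_) <;>
          refine (Finset.abs_sum_le_sum_abs _ _).trans (Finset.sum_le_sum fun i _ =>
            (Finset.abs_sum_le_sum_abs _ _).trans (Finset.sum_le_sum fun k _ => ?_))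
        · exact hterm (hW _ _) (hB _ _)
        · exact hterm (hL _ _) (hB _ _)
    _ = Fintype.card κ * (Fintype.card n + Fintype.card m) * (H * B) := by
        simp only [Finset.sum_const, Finset.card_univ, nsmul_eq_mul]
        ring

end DerivativeOfMinors

section DominantMinor

open Matrix

variable {m n κ : Type*} [Fintype κ] [DecidableEq κ]

/-- The minor of `M` with rows `I` and columns `J` dominates: it is nonzero and at least `C⁻¹`
times the size of every minor of its order, and all minors of the next order (indexed by
`κ ⊕ Unit`) vanish. -/
structure IsDominantMinor (M : Matrix m n ℝ) (I : κ → m) (J : κ → n) (C : ℝ) : Prop where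
  det_ne_zero : (M.submatrix I J).det ≠ 0
  abs_det_le : ∀ (I' : κ → m) (J' : κ → n),
    |(M.submatrix I' J').det| ≤ C * |(M.submatrix I J).det|
  det_eq_zero : ∀ (I' : κ ⊕ Unit → m) (J' : κ ⊕ Unit → n), (M.submatrix I' J').det = 0

namespace IsDominantMinor

variable {M M' : Matrix m n ℝ} {I : κ → m} {J : κ → n} {C : ℝ}

lemma apply_eq_sum (h : IsDominantMinor M I J C) (i : m) (l : n) :
    M i l = ∑ j, (M.submatrix I (Function.update J j l)).det / (M.submatrix I J).det *
      M i (J j) :=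
  apply_eq_sum_of_det_bordered_eq_zero M I J h.det_ne_zero (h.det_eq_zero _ _)

lemma abs_det_div_det_le (h : IsDominantMinor M I J C) (I' : κ → m) (J' : κ → n) :
    |(M.submatrix I' J').det / (M.submatrix I J).det| ≤ C := by
  rw [abs_div, div_le_iff₀ (abs_pos.2 h.det_ne_zero)]
  exact h.abs_det_le I' J'

lemma mono (h : IsDominantMinor M I J C) {C' : ℝ} (hC : C ≤ C') : IsDominantMinor M I J C' where
  det_ne_zero := h.det_ne_zero
  abs_det_le I' J' := (h.abs_det_le I' J').trans (by gcongr)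
  det_eq_zero := h.det_eq_zero

lemma of_mul_diagonal [Fintype n] [DecidableEq n] {q : n → ℝ} (hq : ∀ l, 0 < q l) {R : ℝ}
    (hqR : ∀ l l', q l ≤ R * q l') (h : IsDominantMinor (M * diagonal q) I J C) :
    IsDominantMinor M I J (C * R ^ Fintype.card κ) where
  det_ne_zero hdet := h.det_ne_zero <| by rw [det_submatrix_mul_diagonal, hdet, mul_zero]
  abs_det_le I' J' := by
    have hprod_pos : ∀ J' : κ → n, 0 < ∏ j, q (J' j) := fun J' =>
      Finset.prod_pos fun j _ => hq (J' j)
    have hprod_le : ∏ j, q (J j) ≤ R ^ Fintype.card κ * ∏ j, q (J' j) := by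
      rw [← Finset.card_univ, ← Finset.prod_const, ← Finset.prod_mul_distrib]
      exact Finset.prod_le_prod (fun j _ => (hq _).le) fun j _ => hqR _ _
    have hC : 0 ≤ C := (abs_nonneg _).trans (h.abs_det_div_det_le I J)
    have hle := h.abs_det_le I' J'
    simp only [det_submatrix_mul_diagonal, abs_mul, abs_of_pos (hprod_pos _)] at hle
    refine le_of_mul_le_mul_left ?_ (hprod_pos J')
    calc (∏ j, q (J' j)) * |(M.submatrix I' J').det|
        ≤ C * ((∏ j, q (J j)) * |(M.submatrix I J).det|) := hle
      _ ≤ C * (R ^ Fintype.card κ * (∏ j, q (J' j)) * |(M.submatrix I J).det|) := by gcongr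
      _ = (∏ j, q (J' j)) * (C * R ^ Fintype.card κ * |(M.submatrix I J).det|) := by ring
  det_eq_zero I' J' := by
    have hzero := h.det_eq_zero I' J'
    rw [det_submatrix_mul_diagonal] at hzero
    exact (mul_eq_zero.1 hzero).resolve_left (Finset.prod_pos fun j _ => hq (J' j)).ne'

lemma of_abs_sub_le (h : IsDominantMinor M I J C)
    (hnear : ∀ (I' : κ → m) (J' : κ → n),
      |(M'.submatrix I' J').det - (M.submatrix I' J').det| ≤ 1 / 2 * |(M.submatrix I J).det|)
    (hzero : ∀ (I' : κ ⊕ Unit → m) (J' : κ ⊕ Unit → n), (M'.submatrix I' J').det = 0) :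
    IsDominantMinor M' I J (2 * C + 1) := by
  have hpos : 0 < |(M.submatrix I J).det| := abs_pos.2 h.det_ne_zero
  have hhalf : 1 / 2 * |(M.submatrix I J).det| ≤ |(M'.submatrix I J).det| := by
    have htri := abs_sub_abs_le_abs_sub (M.submatrix I J).det (M'.submatrix I J).det
    rw [abs_sub_comm] at htri
    linarith [hnear I J]
  refine ⟨fun hdet => ?_, fun I' J' => ?_, hzero⟩
  · rw [hdet, abs_zero] at hhalf
    linarith
  · have hC : 0 ≤ C := (abs_nonneg _).trans (h.abs_det_div_det_le I J)
    have htri := abs_sub_abs_le_abs_sub (M'.submatrix I' J').det (M.submatrix I' J').det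
    calc |(M'.submatrix I' J').det|
        ≤ (2 * C + 1) * (1 / 2 * |(M.submatrix I J).det|) := by
          linarith [hnear I' J', h.abs_det_le I' J']
      _ ≤ (2 * C + 1) * |(M'.submatrix I J).det| := by gcongr

end IsDominantMinor

variable [Finite m] [Fintype n]

lemma exists_isDominantMinor_of_iSup_le (M : Matrix m n ℝ) (F : Finset n)
    [Nonempty (Fin M.rank → F)] {C : ℝ}
    (hle : (⨆ (I : Fin M.rank → m) (J : Fin M.rank → n), |(M.submatrix I J).det|) ≤
      C * ⨆ (I : Fin M.rank → m) (J : Fin M.rank → F), |(M.submatrix I fun j => (J j : n)).det|) :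
    ∃ (I : Fin M.rank → m) (J : Fin M.rank → F), IsDominantMinor M I (fun j => (J j : n)) C := by
  obtain ⟨I₀, J₀, hdet₀⟩ := exists_det_submatrix_ne_zero M
  have : Nonempty (Fin M.rank → m) := ⟨I₀⟩
  obtain ⟨I, J, hIJ⟩ := exists_abs_det_submatrix_eq_iSup (κ := Fin M.rank)
    (M.submatrix id ((↑) : F → n))
  have habs : ∀ (I' : Fin M.rank → m) (J' : Fin M.rank → n),
      |(M.submatrix I' J').det| ≤ C * |(M.submatrix I fun j => (J j : n)).det| := fun I' J' =>
    ((abs_det_submatrix_le_iSup M I' J').trans hle).trans_eq (congrArg (C * ·) hIJ.symm)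
  refine ⟨I, J, fun hdet => hdet₀ ?_, habs, fun I' J' =>
    det_submatrix_eq_zero_of_rank_lt (by simp) I' J'⟩
  simpa only [hdet, abs_zero, mul_zero, abs_nonpos_iff] using habs I₀ J₀

lemma exists_isDominantMinor (M : Matrix m n ℝ) (F : Finset n) {C : ℝ} (hC : 1 ≤ C)
    (h : 0 < M.rank → M.rank ≤ F.card ∧
      (⨆ (I : Fin M.rank → m) (J : Fin M.rank → n), |(M.submatrix I J).det|) ≤
        C * ⨆ (I : Fin M.rank → m) (J : Fin M.rank → F),
          |(M.submatrix I fun j => (J j : n)).det|) :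
    ∃ (I : Fin M.rank → m) (J : Fin M.rank → F), IsDominantMinor M I (fun j => (J j : n)) C := by
  rcases M.rank.eq_zero_or_pos with hrank | hrank
  · have : IsEmpty (Fin M.rank) := by rw [hrank]; infer_instance
    exact exists_isDominantMinor_of_iSup_le M F (by simpa using hC)
  · obtain ⟨hcard, hle⟩ := h hrank
    obtain ⟨l, hl⟩ := Finset.card_pos.1 (hrank.trans_le hcard)
    have : Nonempty (Fin M.rank → F) := ⟨fun _ => ⟨l, hl⟩⟩
    exact exists_isDominantMinor_of_iSup_le M F hle

end DominantMinor

section DegreePowers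

variable {ν : ℕ} {δ a b : Fin ν → ℝ}

lemma dpow_add (hδ : ∀ μ, 0 ≤ δ μ) (ha : ∀ μ, 0 ≤ a μ) (hb : ∀ μ, 0 ≤ b μ) :
    dpow δ (a + b) = dpow δ a * dpow δ b := by
  simp only [dpow, ← Finset.prod_mul_distrib]
  exact Finset.prod_congr rfl fun μ _ => Real.rpow_add_of_nonneg (hδ μ) (ha μ) (hb μ)

lemma dpow_mem_Icc_of_mem_unitCube (hδ : δ ∈ unitCube ν) (ha : ∀ μ, 0 ≤ a μ) :
    dpow δ a ∈ Icc (0 : ℝ) 1 :=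
  ⟨Finset.prod_nonneg fun μ _ => Real.rpow_nonneg (hδ μ).1 _,
    Finset.prod_le_one (fun μ _ => Real.rpow_nonneg (hδ μ).1 _)
      fun μ _ => Real.rpow_le_one (hδ μ).1 (hδ μ).2 (ha μ)⟩

lemma dpow_const_mul {t : ℝ} (ht : 0 < t) (hδ : ∀ μ, 0 ≤ δ μ) :
    dpow (fun μ => t * δ μ) a = t ^ (∑ μ, a μ) * dpow δ a := by
  simp only [dpow]
  rw [Real.rpow_sum_of_pos ht, ← Finset.prod_mul_distrib]
  exact Finset.prod_congr rfl fun μ _ => Real.mul_rpow ht.le (hδ μ)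

lemma scaledMat_const_mul {n Q : ℕ} (X : Fin Q → VF n) (d : Fin Q → Deg ν) {t : ℝ} (ht : 0 < t)
    (hδ : ∀ μ, 0 ≤ δ μ) (x : Euc n) :
    scaledMat X d (fun μ => t * δ μ) x =
      scaledMat X d δ x * Matrix.diagonal fun l => t ^ (∑ μ, d l μ) := by
  ext i l
  rw [Matrix.mul_diagonal]
  simp only [scaledMat, dpow_const_mul ht hδ]
  ring

lemma exists_rpow_le {ι : Type*} [Finite ι] {p : ι → ℝ} (hp : ∀ l, 0 < p l) {η ξ₁ : ℝ}
    (hη : 0 < η) (hξ₁ : 0 < ξ₁) : ∃ ξ ∈ Ioc 0 ξ₁, ∀ l, ξ ^ p l ≤ η := by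
  have htendsto : ∀ l, Tendsto (fun ξ : ℝ => ξ ^ p l) (𝓝[>] 0) (𝓝 0) := fun l => by
    have h := (Real.continuousAt_rpow_const 0 (p l) (Or.inr (hp l).le)).tendsto
    rw [Real.zero_rpow (hp l).ne'] at h
    exact h.mono_left nhdsWithin_le_nhds
  have hIoc : ∀ᶠ ξ in 𝓝[>] (0 : ℝ), ξ ∈ Ioc 0 ξ₁ := Ioc_mem_nhdsGT hξ₁
  exact (hIoc.and (eventually_all.2 fun l => (htendsto l).eventually_le_const hη)).exists

end DegreePowers

section InvolutiveSystem

variable {ν n Q : ℕ}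

/-- The vector fields `X` with degrees `d` are smooth and involutive on `Ω`, with structure
functions `c`: `[X_k, X_l] = ∑_i c_{k,l}^i X_i`, where only `i` with `d_i ≤ d_k + d_l` occur. -/
structure IsInvolutiveSystem (Ω : Set (Euc n)) (X : Fin Q → VF n) (d : Fin Q → Deg ν)
    (c : Fin Q → Fin Q → Fin Q → Euc n → ℝ) : Prop where
  isOpen : IsOpen Ω
  degree_nonneg : ∀ l μ, 0 ≤ d l μ
  contDiffOn_field : ∀ l, ContDiffOn ℝ (⊤ : ℕ∞) (X l) Ω
  contDiffOn_coeff : ∀ k l i, ContDiffOn ℝ (⊤ : ℕ∞) (c k l i) Ω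
  coeff_eq_zero : ∀ k l i, ¬ (∀ μ, d i μ ≤ d k μ + d l μ) → c k l i = 0
  lieBracket_eq : ∀ k l, ∀ y ∈ Ω, lieBracket (X k) (X l) y = ∑ i, c k l i y • X i y

/-- The weight `δ^{d_k + d_l - d_i}` of the structure function `c_{k,l}^i` in the commutator of
the rescaled fields; it is set to zero where that structure function vanishes anyway. -/
def bracketWeight (d : Fin Q → Deg ν) (δ : Fin ν → ℝ) (k l i : Fin Q) : ℝ :=
  open Classical in if ∀ μ, d i μ ≤ d k μ + d l μ then dpow δ (d k + d l - d i) else 0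

/-- The structure matrix of the rescaled field `δ^{d_k} X_k`: its `l`-th column holds the
coefficients of `[δ^{d_k} X_k, δ^{d_l} X_l]` in terms of the rescaled fields. -/
def structureMatrix (d : Fin Q → Deg ν) (c : Fin Q → Fin Q → Fin Q → Euc n → ℝ)
    (δ : Fin ν → ℝ) (k : Fin Q) (y : Euc n) : Matrix (Fin Q) (Fin Q) ℝ :=
  Matrix.of fun i l => bracketWeight d δ k l i * c k l i y

/-- The Jacobian matrix of a vector field. -/
def jacobian (V : VF n) (y : Euc n) : Matrix (Fin n) (Fin n) ℝ :=
  Matrix.of fun i m => fderiv ℝ V y (EuclideanSpace.single m 1) i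

lemma fderiv_apply_eq_jacobian_mulVec (V : VF n) (y v : Euc n) (i : Fin n) :
    fderiv ℝ V y v i = ∑ m, jacobian V y i m * v m := by
  conv_lhs => rw [← (EuclideanSpace.basisFun (Fin n) ℝ).sum_repr v]
  simp [jacobian, mul_comm]

lemma bracketWeight_mem_Icc {d : Fin Q → Deg ν} {δ : Fin ν → ℝ} (hδ : δ ∈ unitCube ν)
    (k l i : Fin Q) : bracketWeight d δ k l i ∈ Icc (0 : ℝ) 1 := by
  unfold bracketWeight
  split_ifs with h
  · exact dpow_mem_Icc_of_mem_unitCube hδ fun μ => sub_nonneg.2 (h μ)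
  · exact ⟨le_rfl, zero_le_one⟩

namespace IsInvolutiveSystem

variable {Ω : Set (Euc n)} {X : Fin Q → VF n} {d : Fin Q → Deg ν}
  {c : Fin Q → Fin Q → Fin Q → Euc n → ℝ} {δ : Fin ν → ℝ} {y : Euc n}

lemma differentiableAt_field (h : IsInvolutiveSystem Ω X d c) (l : Fin Q) (hy : y ∈ Ω) :
    DifferentiableAt ℝ (X l) y :=
  ((h.contDiffOn_field l).contDiffAt (h.isOpen.mem_nhds hy)).differentiableAt (by simp)

lemma contDiffOn_jacobian (h : IsInvolutiveSystem Ω X d c) (l : Fin Q) (i m : Fin n) :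
    ContDiffOn ℝ (⊤ : ℕ∞) (fun y => jacobian (X l) y i m) Ω :=
  contDiffOn_euclidean.1
    (((h.contDiffOn_field l).fderiv_of_isOpen h.isOpen (by simp)).clm_apply contDiffOn_const) i

lemma contDiffOn_scaledMat (h : IsInvolutiveSystem Ω X d c) (δ : Fin ν → ℝ) (i : Fin n)
    (l : Fin Q) : ContDiffOn ℝ (⊤ : ℕ∞) (fun y => scaledMat X d δ y i l) Ω :=
  contDiffOn_const.mul (contDiffOn_euclidean.1 (h.contDiffOn_field l) i)

lemma differentiableAt_scaledMat (h : IsInvolutiveSystem Ω X d c) (δ : Fin ν → ℝ) (hy : y ∈ Ω)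
    (i : Fin n) (l : Fin Q) : DifferentiableAt ℝ (fun y => scaledMat X d δ y i l) y :=
  ((h.contDiffOn_scaledMat δ i l).contDiffAt (h.isOpen.mem_nhds hy)).differentiableAt (by simp)

lemma contDiffOn_scaledMinor (h : IsInvolutiveSystem Ω X d c) (δ : Fin ν → ℝ) {κ : Type*}
    [Fintype κ] [DecidableEq κ] (I : κ → Fin n) (J : κ → Fin Q) :
    ContDiffOn ℝ (⊤ : ℕ∞) (fun y => ((scaledMat X d δ y).submatrix I J).det) Ω := by
  simp only [Matrix.det_apply]
  exact ContDiffOn.sum fun σ _ =>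
    (contDiffOn_prod fun i _ => h.contDiffOn_scaledMat δ (I (σ i)) (J i)).const_smul _

lemma dpow_mul_dpow_mul_coeff (h : IsInvolutiveSystem Ω X d c) (hδ : ∀ μ, 0 ≤ δ μ)
    (k l i : Fin Q) (y : Euc n) :
    dpow δ (d k) * dpow δ (d l) * c k l i y =
      dpow δ (d i) * structureMatrix d c δ k y i l := by
  simp only [structureMatrix, bracketWeight, Matrix.of_apply]
  split_ifs with hi
  · have hadd : dpow δ (d k) * dpow δ (d l) = dpow δ (d i) * dpow δ (d k + d l - d i) := by
      rw [← dpow_add hδ (h.degree_nonneg k) (h.degree_nonneg l),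
        ← dpow_add (b := d k + d l - d i) hδ (h.degree_nonneg i) fun μ => sub_nonneg.2 (hi μ),
        add_sub_cancel]
    rw [hadd]
    ring
  · simp [h.coeff_eq_zero k l i hi]

-- In `X_k X_l = [X_k, X_l] + X_l X_k` the first term recombines columns and the second one rows.
lemma fderiv_scaledMat_apply (h : IsInvolutiveSystem Ω X d c) (hδ : ∀ μ, 0 ≤ δ μ) (k : Fin Q)
    (hy : y ∈ Ω) (i : Fin n) (l : Fin Q) :
    fderiv ℝ (fun z => scaledMat X d δ z i l) y (dpow δ (d k) • X k y) =
      (scaledMat X d δ y * structureMatrix d c δ k y +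
        (dpow δ (d k) • jacobian (X k) y) * scaledMat X d δ y) i l := by
  have hentry : fderiv ℝ (fun z => scaledMat X d δ z i l) y (dpow δ (d k) • X k y) =
      dpow δ (d k) * (dpow δ (d l) * fderiv ℝ (X l) y (X k y) i) := by
    have hproj := ((EuclideanSpace.proj i : Euc n →L[ℝ] ℝ).hasFDerivAt.comp y
      (h.differentiableAt_field l hy).hasFDerivAt).const_mul (dpow δ (d l))
    rw [map_smul, smul_eq_mul]
    exact congrArg (dpow δ (d k) * ·) (congrArg (· (X k y)) hproj.fderiv)
  have hbracket : fderiv ℝ (X l) y (X k y) i =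
      ∑ i', c k l i' y * X i' y i + ∑ m, jacobian (X k) y i m * X l y m := by
    have hlie : fderiv ℝ (X l) y (X k y) =
        ∑ i', c k l i' y • X i' y + fderiv ℝ (X k) y (X l y) := by
      rw [← h.lieBracket_eq k l y hy, lieBracket, sub_add_cancel]
    rw [hlie, ← fderiv_apply_eq_jacobian_mulVec]
    simp
  rw [hentry, hbracket, Matrix.add_apply, Matrix.mul_apply, Matrix.mul_apply, mul_add, mul_add,
    Finset.mul_sum, Finset.mul_sum, Finset.mul_sum, Finset.mul_sum]
  congr 1
  · refine Finset.sum_congr rfl fun i' _ => ?_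
    rw [scaledMat]
    linear_combination X i' y i * h.dpow_mul_dpow_mul_coeff hδ k l i' y
  · refine Finset.sum_congr rfl fun m _ => ?_
    rw [scaledMat, Matrix.smul_apply, smul_eq_mul]
    ring

lemma exists_bound_of_isCompact (h : IsInvolutiveSystem Ω X d c) {K : Set (Euc n)}
    (hK : IsCompact K) (hKΩ : K ⊆ Ω) :
    ∃ H, 0 ≤ H ∧ ∀ y ∈ K, (∀ l, ‖X l y‖ ≤ H) ∧ (∀ k l i, |c k l i y| ≤ H) ∧
      ∀ l i m, |jacobian (X l) y i m| ≤ H := by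
  have hX : ContinuousOn (fun y l => X l y) Ω :=
    continuousOn_pi.2 fun l => (h.contDiffOn_field l).continuousOn
  have hc : ContinuousOn (fun y (p : Fin Q × Fin Q × Fin Q) => c p.1 p.2.1 p.2.2 y) Ω :=
    continuousOn_pi.2 fun p => (h.contDiffOn_coeff _ _ _).continuousOn
  have hJ : ContinuousOn (fun y (p : Fin Q × Fin n × Fin n) => jacobian (X p.1) y p.2.1 p.2.2) Ω :=
    continuousOn_pi.2 fun p => (h.contDiffOn_jacobian _ _ _).continuousOn
  obtain ⟨H, hH⟩ := hK.exists_bound_of_continuousOn ((hX.prodMk (hc.prodMk hJ)).mono hKΩ)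
  refine ⟨max H 0, le_max_right _ _, fun y hy => ?_⟩
  have hle := (hH y hy).trans (le_max_left H 0)
  simp only [norm_prod_le_iff, pi_norm_le_iff_of_nonneg (le_max_right H 0)] at hle
  exact ⟨hle.1, fun k l i => hle.2.1 (k, l, i), fun l i m => hle.2.2 (l, i, m)⟩

lemma abs_fderiv_scaledMinor_apply_le (h : IsInvolutiveSystem Ω X d c) (hδ : δ ∈ unitCube ν)
    (hy : y ∈ Ω) {H : ℝ} (hH : 0 ≤ H) (hc : ∀ k l i, |c k l i y| ≤ H)
    (hX : ∀ l i m, |jacobian (X l) y i m| ≤ H) {κ : Type*} [Fintype κ] [DecidableEq κ] {B : ℝ}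
    (hB : ∀ (I : κ → Fin n) (J : κ → Fin Q), |((scaledMat X d δ y).submatrix I J).det| ≤ B)
    (I : κ → Fin n) (J : κ → Fin Q) (k : Fin Q) :
    |fderiv ℝ (fun z => ((scaledMat X d δ z).submatrix I J).det) y (dpow δ (d k) • X k y)| ≤
      Fintype.card κ * (Q + n) * (H * B) := by
  have hmul : ∀ {w z : ℝ}, w ∈ Icc (0 : ℝ) 1 → |z| ≤ H → |w * z| ≤ H := fun hw hz => by
    rw [abs_mul, abs_of_nonneg hw.1]
    exact (mul_le_of_le_one_left (abs_nonneg _) hw.2).trans hz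
  simpa only [Fintype.card_fin] using
    abs_fderiv_det_submatrix_apply_le (h.differentiableAt_scaledMat δ hy)
      (h.fderiv_scaledMat_apply (fun μ => (hδ μ).1) k hy) hH
      (fun l i => hmul (bracketWeight_mem_Icc hδ k i l) (hc _ _ _))
      (fun i m => hmul (dpow_mem_Icc_of_mem_unitCube hδ (h.degree_nonneg k)) (hX _ _ _)) hB I J

end IsInvolutiveSystem

end InvolutiveSystem

section QuotientAlgebra

variable {n : ℕ} {Θ P : Type*}

lemma derivAlong_div_apply {V : VF n} {a b : Euc n → ℝ} {y : Euc n} (ha : DifferentiableAt ℝ a y)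
    (hb : DifferentiableAt ℝ b y) (hy : b y ≠ 0) :
    derivAlong V (fun y => a y / b y) y =
      fderiv ℝ a y (V y) / b y - a y / b y * (fderiv ℝ b y (V y) / b y) := by
  have hdiv : HasFDerivAt (fun z => a z * (b z)⁻¹) _ y := ha.hasFDerivAt.mul
    ((hasDerivAt_inv hy).comp_hasFDerivAt y hb.hasFDerivAt)
  simp only [derivAlong, div_eq_mul_inv, hdiv.fderiv, add_apply, smul_apply,
    smul_eq_mul]
  field_simp
  ring

/-- The algebra of parametrised functions generated by the smooth functions on `Ω`, the bounded
functions of the parameter alone, and the quotients `v p / v p₀`. The derivatives of the control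
coefficients along the rescaled fields stay in such an algebra, whose elements are bounded
uniformly in the parameter wherever the generating quotients are. -/
def quotientAlgebra (Ω : Set (Euc n)) (v : P → Θ → Euc n → ℝ) (p₀ : P) :
    Subalgebra ℝ (Θ → Euc n → ℝ) :=
  Algebra.adjoin ℝ ({f | ∃ h, ContDiffOn ℝ (⊤ : ℕ∞) h Ω ∧ f = fun _ => h} ∪
    {f | ∃ s : Θ → ℝ, (∃ C, ∀ θ, |s θ| ≤ C) ∧ f = fun θ _ => s θ} ∪
    range fun p θ y => v p θ y / v p₀ θ y)

namespace quotientAlgebra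

variable {Ω : Set (Euc n)} {v : P → Θ → Euc n → ℝ} {p₀ : P} {f : Θ → Euc n → ℝ}

lemma smooth_mem {h : Euc n → ℝ} (hh : ContDiffOn ℝ (⊤ : ℕ∞) h Ω) :
    (fun _ => h) ∈ quotientAlgebra Ω v p₀ :=
  Algebra.subset_adjoin (.inl (.inl ⟨h, hh, rfl⟩))

lemma bounded_mem {s : Θ → ℝ} (hs : ∃ C, ∀ θ, |s θ| ≤ C) :
    (fun θ _ => s θ) ∈ quotientAlgebra Ω v p₀ :=
  Algebra.subset_adjoin (.inl (.inr ⟨s, hs, rfl⟩))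

lemma quotient_mem (p : P) : (fun θ y => v p θ y / v p₀ θ y) ∈ quotientAlgebra Ω v p₀ :=
  Algebra.subset_adjoin (.inr ⟨p, rfl⟩)

lemma induction {motive : ∀ f : Θ → Euc n → ℝ, f ∈ quotientAlgebra Ω v p₀ → Prop}
    (smooth : ∀ h (hh : ContDiffOn ℝ (⊤ : ℕ∞) h Ω), motive (fun _ => h) (smooth_mem hh))
    (bounded : ∀ (s : Θ → ℝ) (hs : ∃ C, ∀ θ, |s θ| ≤ C), motive (fun θ _ => s θ) (bounded_mem hs))
    (quotient : ∀ p, motive (fun θ y => v p θ y / v p₀ θ y) (quotient_mem p))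
    (add : ∀ f g hf hg, motive f hf → motive g hg → motive (f + g) (add_mem hf hg))
    (mul : ∀ f g hf hg, motive f hf → motive g hg → motive (f * g) (mul_mem hf hg))
    (hf : f ∈ quotientAlgebra Ω v p₀) : motive f hf := by
  refine Algebra.adjoin_induction (fun f hf => ?_) (fun r => smooth (fun _ => r) contDiffOn_const)
    add mul hf
  rcases hf with (⟨h, hh, rfl⟩ | ⟨s, hs, rfl⟩) | ⟨p, rfl⟩
  exacts [smooth h hh, bounded s hs, quotient p]

lemma contDiffOn (hv : ∀ p θ, ContDiffOn ℝ (⊤ : ℕ∞) (v p θ) Ω) (hf : f ∈ quotientAlgebra Ω v p₀)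
    (θ : Θ) : ContDiffOn ℝ (⊤ : ℕ∞) (f θ) {y ∈ Ω | v p₀ θ y ≠ 0} := by
  induction hf using quotientAlgebra.induction with
  | smooth h hh => exact hh.mono (sep_subset _ _)
  | bounded => exact contDiffOn_const
  | quotient p =>
    exact ((hv p θ).mono (sep_subset _ _)).div ((hv p₀ θ).mono (sep_subset _ _)) fun y hy => hy.2
  | add f g _ _ ihf ihg => exact ihf.add ihg
  | mul f g _ _ ihf ihg => exact ihf.mul ihg

lemma exists_bound {K : Set (Euc n)} (hK : IsCompact K) (hKΩ : K ⊆ Ω) (C : ℝ)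
    (hf : f ∈ quotientAlgebra Ω v p₀) :
    ∃ B, ∀ θ, ∀ y ∈ K, (∀ p, |v p θ y / v p₀ θ y| ≤ C) → |f θ y| ≤ B := by
  induction hf using quotientAlgebra.induction with
  | smooth h hh =>
    obtain ⟨B, hB⟩ := hK.exists_bound_of_continuousOn (hh.continuousOn.mono hKΩ)
    exact ⟨B, fun θ y hy _ => hB y hy⟩
  | bounded s hs =>
    obtain ⟨B, hB⟩ := hs
    exact ⟨B, fun θ y _ _ => hB θ⟩
  | quotient p => exact ⟨C, fun θ y _ h => h p⟩
  | add f g _ _ ihf ihg =>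
    obtain ⟨B, hB⟩ := ihf
    obtain ⟨B', hB'⟩ := ihg
    exact ⟨B + B', fun θ y hy h => (abs_add_le _ _).trans (add_le_add (hB θ y hy h) (hB' θ y hy h))⟩
  | mul f g _ _ ihf ihg =>
    obtain ⟨B, hB⟩ := ihf
    obtain ⟨B', hB'⟩ := ihg
    refine ⟨B * B', fun θ y hy h => (abs_mul _ _).trans_le ?_⟩
    exact mul_le_mul (hB θ y hy h) (hB' θ y hy h) (abs_nonneg _)
      ((abs_nonneg _).trans (hB θ y hy h))

lemma isOpen_setOf_ne_zero (hΩ : IsOpen Ω) (hv : ∀ p θ, ContDiffOn ℝ (⊤ : ℕ∞) (v p θ) Ω) (θ : Θ) :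
    IsOpen {y ∈ Ω | v p₀ θ y ≠ 0} :=
  (hv p₀ θ).continuousOn.isOpen_inter_preimage hΩ isOpen_ne

lemma differentiableAt (hΩ : IsOpen Ω) (hv : ∀ p θ, ContDiffOn ℝ (⊤ : ℕ∞) (v p θ) Ω)
    (hf : f ∈ quotientAlgebra Ω v p₀) {θ : Θ} {y : Euc n} (hy : y ∈ {y ∈ Ω | v p₀ θ y ≠ 0}) :
    DifferentiableAt ℝ (f θ) y :=
  ((contDiffOn hv hf θ).contDiffAt
    ((isOpen_setOf_ne_zero hΩ hv θ).mem_nhds hy)).differentiableAt (by simp)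

lemma exists_derivAlong_eqOn (hΩ : IsOpen Ω) (hv : ∀ p θ, ContDiffOn ℝ (⊤ : ℕ∞) (v p θ) Ω)
    {V : VF n} (hV : ContDiffOn ℝ (⊤ : ℕ∞) V Ω) {w : Θ → ℝ} (hw : ∃ C, ∀ θ, |w θ| ≤ C)
    (hder : ∀ p, ∃ g ∈ quotientAlgebra Ω v p₀, ∀ θ, EqOn
      (fun y => fderiv ℝ (v p θ) y (w θ • V y) / v p₀ θ y) (g θ) {y ∈ Ω | v p₀ θ y ≠ 0})
    (hf : f ∈ quotientAlgebra Ω v p₀) :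
    ∃ g ∈ quotientAlgebra Ω v p₀, ∀ θ,
      EqOn (derivAlong (fun y => w θ • V y) (f θ)) (g θ) {y ∈ Ω | v p₀ θ y ≠ 0} := by
  induction hf using quotientAlgebra.induction with
  | smooth h hh =>
    refine ⟨(fun θ _ => w θ) * fun _ y => fderiv ℝ h y (V y), mul_mem (bounded_mem hw) (smooth_mem
      ((hh.fderiv_of_isOpen hΩ (by simp)).clm_apply hV)), fun θ y _ => ?_⟩
    simp [derivAlong]
  | bounded =>
    refine ⟨0, zero_mem _, fun θ y _ => ?_⟩
    simp [derivAlong]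
  | quotient p =>
    have hdiff : ∀ p θ, ∀ y ∈ Ω, DifferentiableAt ℝ (v p θ) y := fun p θ y hy =>
      ((hv p θ).contDiffAt (hΩ.mem_nhds hy)).differentiableAt (by simp)
    obtain ⟨g, hg, hge⟩ := hder p
    obtain ⟨g₀, hg₀, hg₀e⟩ := hder p₀
    refine ⟨_, sub_mem hg (mul_mem (quotient_mem p) hg₀), fun θ y hy => ?_⟩
    rw [derivAlong_div_apply (hdiff p θ y hy.1) (hdiff p₀ θ y hy.1) hy.2]
    exact congrArg₂ (fun a b => a - v p θ y / v p₀ θ y * b) (hge θ hy) (hg₀e θ hy)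
  | add f₁ f₂ hf₁ hf₂ ih₁ ih₂ =>
    obtain ⟨g₁, hg₁, he₁⟩ := ih₁
    obtain ⟨g₂, hg₂, he₂⟩ := ih₂
    refine ⟨g₁ + g₂, add_mem hg₁ hg₂, fun θ y hy => ?_⟩
    have hd₁ := differentiableAt hΩ hv hf₁ hy
    have hd₂ := differentiableAt hΩ hv hf₂ hy
    simp only [Pi.add_apply, ← he₁ θ hy, ← he₂ θ hy, derivAlong]
    rw [fderiv_add hd₁ hd₂]
    rfl
  | mul f₁ f₂ hf₁ hf₂ ih₁ ih₂ =>
    obtain ⟨g₁, hg₁, he₁⟩ := ih₁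
    obtain ⟨g₂, hg₂, he₂⟩ := ih₂
    refine ⟨f₁ * g₂ + f₂ * g₁, add_mem (mul_mem hf₁ hg₂) (mul_mem hf₂ hg₁), fun θ y hy => ?_⟩
    have hd₁ := differentiableAt hΩ hv hf₁ hy
    have hd₂ := differentiableAt hΩ hv hf₂ hy
    simp only [Pi.add_apply, Pi.mul_apply, ← he₁ θ hy, ← he₂ θ hy, derivAlong]
    rw [fderiv_mul hd₁ hd₂]
    rfl

lemma exists_derivList_eqOn (hΩ : IsOpen Ω) (hv : ∀ p θ, ContDiffOn ℝ (⊤ : ℕ∞) (v p θ) Ω)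
    {ι : Type*} {V : ι → VF n} (hV : ∀ k, ContDiffOn ℝ (⊤ : ℕ∞) (V k) Ω) {w : Θ → ι → ℝ}
    (hw : ∀ k, ∃ C, ∀ θ, |w θ k| ≤ C)
    (hder : ∀ k p, ∃ g ∈ quotientAlgebra Ω v p₀, ∀ θ, EqOn
      (fun y => fderiv ℝ (v p θ) y (w θ k • V k y) / v p₀ θ y) (g θ) {y ∈ Ω | v p₀ θ y ≠ 0})
    (hf : f ∈ quotientAlgebra Ω v p₀) (α : List ι) :
    ∃ g ∈ quotientAlgebra Ω v p₀, ∀ θ,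
      EqOn (derivList V (w θ) α (f θ)) (g θ) {y ∈ Ω | v p₀ θ y ≠ 0} := by
  induction α with
  | nil => exact ⟨f, hf, fun θ y _ => rfl⟩
  | cons k α ih =>
    obtain ⟨g, hg, he⟩ := ih
    obtain ⟨g', hg', he'⟩ := exists_derivAlong_eqOn hΩ hv (hV k) (hw k) (hder k) hg
    refine ⟨g', hg', fun θ y hy => ?_⟩
    have hnhds := (isOpen_setOf_ne_zero hΩ hv θ).mem_nhds hy
    calc derivList V (w θ) (k :: α) (f θ) y
        = derivAlong (fun y => w θ k • V k y) (g θ) y :=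
          congrArg (fun L : Euc n →L[ℝ] ℝ => L (w θ k • V k y))
            ((he θ).eventuallyEq_of_mem hnhds).fderiv_eq
      _ = g' θ y := he' θ hy

end quotientAlgebra

end QuotientAlgebra

section ControlCurves

variable {ν n : ℕ} {ι : Type*} [Fintype ι] {X : ι → VF n} {d : ι → Deg ν} {x : Euc n}

lemma Zhang.IsSubunit.ae_abs_le_one {a : ℝ → ι → ℝ} (ha : IsSubunit a) :
    ∀ᵐ s ∂volume.restrict (Icc (0 : ℝ) 1), ∀ l, |a s l| ≤ 1 := by
  obtain ⟨-, c, hc, hac⟩ := ha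
  filter_upwards [hac] with s hs l
  have hsq : a s l ^ 2 ≤ ∑ l, a s l ^ 2 :=
    Finset.single_le_sum (fun i _ => sq_nonneg (a s i)) (Finset.mem_univ l)
  exact sq_le_one_iff_abs_le_one _ |>.1 (hsq.trans (hs.trans hc.le))

lemma dpow_vecConst {t : ℝ} (ht : 0 < t) (a : Deg ν) : dpow (vecConst ν t) a = t ^ ∑ μ, a μ :=
  (Real.rpow_sum_of_pos ht a Finset.univ).symm

-- Slowing a control down by the factors `(t / t')^{|d_l|} ≤ 1` keeps it subunit.
lemma Zhang.SatC.mono {Ω : Set (Euc n)} (hd : ∀ l, 0 ≤ ∑ μ, d l μ) {t t' : ℝ} (ht : 0 < t)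
    (hle : t ≤ t') (h : SatC X d x (vecConst ν t') Ω) : SatC X d x (vecConst ν t) Ω := by
  rintro a ⟨ham, c, hc1, hc⟩
  have ht' : 0 < t' := ht.trans_le hle
  set q : ι → ℝ := fun l => (t / t') ^ ∑ μ, d l μ
  have hq0 : ∀ l, 0 ≤ q l := fun l => Real.rpow_nonneg (div_pos ht ht').le _
  have hq1 : ∀ l, q l ≤ 1 := fun l =>
    Real.rpow_le_one (div_pos ht ht').le ((div_le_one ht').2 hle) (hd l)
  have hsub : IsSubunit fun s l => q l * a s l := by
    refine ⟨fun l => (ham l).const_mul _, c, hc1, hc.mono fun s hs => ?_⟩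
    refine (Finset.sum_le_sum fun l _ => ?_).trans hs
    rw [mul_pow]
    exact mul_le_of_le_one_left (sq_nonneg _) (pow_le_one₀ (hq0 l) (hq1 l))
  obtain ⟨g, hgΩ, hg0, hg⟩ := h _ hsub
  refine ⟨g, hgΩ, hg0, fun u hu => (hg u hu).trans ?_⟩
  have hdpow : ∀ l, q l * dpow (vecConst ν t') (d l) = dpow (vecConst ν t) (d l) := fun l => by
    rw [dpow_vecConst ht, dpow_vecConst ht', ← Real.mul_rpow (div_pos ht ht').le ht'.le,
      div_mul_cancel₀ _ ht'.ne']
  simp only [← hdpow, smul_smul, mul_left_comm, mul_assoc]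

lemma Zhang.SolvesODE.isAbsContCurve_or_eq {δ : Fin ν → ℝ} {a : ℝ → ι → ℝ} {g : ℝ → Euc n}
    (hg : SolvesODE X d δ a x g) :
    IsAbsContCurve (fun s => ∑ l, a s l • dpow δ (d l) • X l (g s)) x g ∨ g 1 = x := by
  by_cases hint : IntervalIntegrable (fun s => ∑ l, a s l • dpow δ (d l) • X l (g s)) volume 0 1
  · exact .inl ⟨hint, hg.2⟩
  -- A non-integrable velocity has the junk integral zero, so the endpoint is the base point.
  · exact .inr ((hg.2 1 ⟨zero_le_one, le_rfl⟩).trans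
      (by rw [intervalIntegral.integral_undef hint, add_zero]))

lemma eq_or_exists_isAbsContCurve_of_mem_ccBall {Ω : Set (Euc n)} {δ : Fin ν → ℝ}
    (hδ : ∀ μ, 0 ≤ δ μ) {t η : ℝ} (ht : 0 < t) (htη : ∀ l, t ^ (∑ μ, d l μ) ≤ η) {y : Euc n}
    (hy : y ∈ CCBall X d Ω x (fun μ => t * δ μ)) :
    y = x ∨ ∃ (g : ℝ → Euc n) (b : ℝ → ι → ℝ),
      IsAbsContCurve (fun s => ∑ l, b s l • dpow δ (d l) • X l (g s)) x g ∧
      (∀ᵐ s ∂volume.restrict (Icc (0 : ℝ) 1), ∀ l, |b s l| ≤ η) ∧ g 1 = y := by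
  obtain ⟨g, a, ha, -, hg, rfl⟩ := hy
  refine hg.isAbsContCurve_or_eq.symm.imp_right fun hcurve =>
    ⟨g, fun s l => a s l * t ^ ∑ μ, d l μ, ?_, ?_, rfl⟩
  · simpa only [dpow_const_mul ht hδ, smul_smul, mul_assoc] using hcurve
  · filter_upwards [ha.ae_abs_le_one] with s hs l
    rw [abs_mul, abs_of_pos (Real.rpow_pos_of_pos ht _)]
    exact (mul_le_of_le_one_left (Real.rpow_nonneg ht.le _) (hs l)).trans (htη l)

lemma norm_sum_smul_le {E : Type*} [SeminormedAddCommGroup E] [NormedSpace ℝ E] {b : ι → ℝ}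
    {w : ι → E} {η H : ℝ} (hη : 0 ≤ η) (hb : ∀ l, |b l| ≤ η) (hw : ∀ l, ‖w l‖ ≤ H) :
    ‖∑ l, b l • w l‖ ≤ Fintype.card ι * (η * H) := by
  refine (norm_sum_le_of_le _ fun l _ => (norm_smul_le (b l) (w l)).trans
    (mul_le_mul (hb l) (hw l) (norm_nonneg _) hη)).trans_eq ?_
  simp

end ControlCurves

section NearConstancy

namespace IsInvolutiveSystem

variable {ν n Q : ℕ} {Ω : Set (Euc n)} {X : Fin Q → VF n} {d : Fin Q → Deg ν}
  {c : Fin Q → Fin Q → Fin Q → Euc n → ℝ} {δ : Fin ν → ℝ} {F : Finset (Fin Q)} {η H : ℝ}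

lemma norm_sum_smul_field_le (h : IsInvolutiveSystem Ω X d c) (hδ : δ ∈ unitCube ν) (hη : 0 ≤ η)
    {b : F → ℝ} (hb : ∀ l, |b l| ≤ η) {y : Euc n} (hX : ∀ l, ‖X l y‖ ≤ H) :
    ‖∑ l, b l • dpow δ (d l) • X l y‖ ≤ F.card * (η * H) := by
  refine (norm_sum_smul_le hη hb fun l => ?_).trans_eq (by rw [Fintype.card_coe])
  have hdpow := dpow_mem_Icc_of_mem_unitCube hδ (h.degree_nonneg l)
  rw [norm_smul, Real.norm_of_nonneg hdpow.1]
  exact (mul_le_of_le_one_left (norm_nonneg _) hdpow.2).trans (hX l)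

lemma abs_fderiv_scaledMinor_sum_smul_field_le (h : IsInvolutiveSystem Ω X d c)
    (hδ : δ ∈ unitCube ν) (hη : 0 ≤ η) {b : F → ℝ} (hb : ∀ l, |b l| ≤ η) {y : Euc n} (hy : y ∈ Ω)
    (hH : 0 ≤ H) (hc : ∀ k l i, |c k l i y| ≤ H) (hX : ∀ l i m, |jacobian (X l) y i m| ≤ H)
    {κ : Type*} [Fintype κ] [DecidableEq κ] {B : ℝ}
    (hB : ∀ (I : κ → Fin n) (J : κ → Fin Q), |((scaledMat X d δ y).submatrix I J).det| ≤ B)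
    (I : κ → Fin n) (J : κ → Fin Q) :
    |fderiv ℝ (fun z => ((scaledMat X d δ z).submatrix I J).det) y
      (∑ l, b l • dpow δ (d l) • X l y)| ≤
      F.card * (η * (Fintype.card κ * (Q + n) * H)) * B := by
  rw [map_sum]
  simp only [map_smul _ (b _)]
  refine (norm_sum_smul_le (E := ℝ) hη hb fun l =>
    h.abs_fderiv_scaledMinor_apply_le hδ hy hH hc hX hB I J l).trans_eq ?_
  rw [Fintype.card_coe]
  ring

variable {x : Euc n} {ρ : ℝ} {g : ℝ → Euc n} {b : ℝ → F → ℝ}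

lemma mapsTo_closedBall (h : IsInvolutiveSystem Ω X d c) (hδ : δ ∈ unitCube ν)
    (hg : IsAbsContCurve (fun s => ∑ l, b s l • dpow δ (d l) • X l (g s)) x g) (hη : 0 ≤ η)
    (hb : ∀ᵐ s ∂volume.restrict (Icc (0 : ℝ) 1), ∀ l, |b s l| ≤ η) (hH : 0 ≤ H)
    (hX : ∀ y ∈ closedBall x ρ, ∀ l, ‖X l y‖ ≤ H) (hρ : F.card * (η * H) < ρ) :
    MapsTo g (Icc 0 1) (closedBall x ρ) :=
  hg.mapsTo_closedBall (by positivity) hρ <| hb.mono fun _ hs hgs =>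
    h.norm_sum_smul_field_le hδ hη hs (hX _ hgs)

lemma abs_scaledMinor_sub_le (h : IsInvolutiveSystem Ω X d c) (hδ : δ ∈ unitCube ν)
    (hg : IsAbsContCurve (fun s => ∑ l, b s l • dpow δ (d l) • X l (g s)) x g) (hη : 0 ≤ η)
    (hb : ∀ᵐ s ∂volume.restrict (Icc (0 : ℝ) 1), ∀ l, |b s l| ≤ η) {K : Set (Euc n)}
    (hKΩ : K ⊆ Ω) (hgK : MapsTo g (Icc 0 1) K) (hH : 0 ≤ H)
    (hbd : ∀ y ∈ K, (∀ l, ‖X l y‖ ≤ H) ∧ (∀ k l i, |c k l i y| ≤ H) ∧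
      ∀ l i m, |jacobian (X l) y i m| ≤ H)
    {κ : Type*} [Fintype κ] [DecidableEq κ]
    (hκ : F.card * (η * (Fintype.card κ * (Q + n) * H)) ≤ 1 / 2) {S : ℝ}
    (hS : ∀ (I : κ → Fin n) (J : κ → Fin Q), |((scaledMat X d δ x).submatrix I J).det| ≤ S)
    (I : κ → Fin n) (J : κ → Fin Q) :
    |((scaledMat X d δ (g 1)).submatrix I J).det - ((scaledMat X d δ x).submatrix I J).det| ≤
      2 * (F.card * (η * (Fintype.card κ * (Q + n) * H))) * S := by
  have hgs : ∀ᵐ s ∂volume.restrict (Icc (0 : ℝ) 1), g s ∈ K :=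
    (ae_restrict_mem measurableSet_Icc).mono hgK
  have hspeed : ∀ᵐ s ∂volume.restrict (Icc (0 : ℝ) 1),
      ‖∑ l, b s l • dpow δ (d l) • X l (g s)‖ ≤ (⟨F.card * (η * H), by positivity⟩ : ℝ≥0) := by
    filter_upwards [hb, hgs] with s hs hgs
    exact h.norm_sum_smul_field_le hδ hη hs (hbd _ hgs).1
  refine hg.abs_comp_sub_le_of_linear_bound hspeed h.isOpen (hgK.mono_right hKΩ)
    (v := fun (p : (κ → Fin n) × (κ → Fin Q)) y => ((scaledMat X d δ y).submatrix p.1 p.2).det)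
    (fun p => (h.contDiffOn_scaledMinor δ p.1 p.2).of_le (by norm_cast)) (by positivity) hκ ?_
    (fun p => hS p.1 p.2) (I, J) ⟨zero_le_one, le_rfl⟩
  filter_upwards [hb, hgs] with s hs hgs B hB p
  exact h.abs_fderiv_scaledMinor_sum_smul_field_le hδ hη hs (hKΩ hgs) hH (hbd _ hgs).2.1
    (hbd _ hgs).2.2 (fun I J => hB (I, J)) p.1 p.2

lemma mem_and_abs_scaledMinor_sub_le_of_mem_ccBall (h : IsInvolutiveSystem Ω X d c)
    (hδ : δ ∈ unitCube ν) {L : Set (Euc n)} (hLΩ : L ⊆ Ω) (hxL : closedBall x ρ ⊆ L) (hρ : 0 < ρ)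
    (hH : 0 ≤ H) (hbd : ∀ y ∈ L, (∀ l, ‖X l y‖ ≤ H) ∧ (∀ k l i, |c k l i y| ≤ H) ∧
      ∀ l i m, |jacobian (X l) y i m| ≤ H) (hη : 0 ≤ η) (hηρ : F.card * (η * H) < ρ) {r : ℕ} {τ : ℝ}
    (hτ : τ ≤ 1) (hηr : F.card * (η * (r * (Q + n) * H)) ≤ τ / 2) {ξ : ℝ} (hξ : 0 < ξ)
    (hξη : ∀ l : F, ξ ^ (∑ μ, d l μ) ≤ η) {y : Euc n}
    (hy : y ∈ CCBall (fun j : F => X j) (fun j : F => d j) Ω x (fun μ => ξ * δ μ)) :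
    y ∈ L ∧ ∀ {κ : Type} [Fintype κ] [DecidableEq κ], Fintype.card κ ≤ r →
      ∀ {S : ℝ}, (∀ (I : κ → Fin n) (J : κ → Fin Q),
        |((scaledMat X d δ x).submatrix I J).det| ≤ S) →
      ∀ (I : κ → Fin n) (J : κ → Fin Q), |((scaledMat X d δ y).submatrix I J).det -
        ((scaledMat X d δ x).submatrix I J).det| ≤ τ * S := by
  obtain rfl | ⟨g, b, hg, hb, rfl⟩ :=
    eq_or_exists_isAbsContCurve_of_mem_ccBall (fun μ => (hδ μ).1) hξ hξη hy
  · refine ⟨hxL (mem_closedBall_self hρ.le), fun _ _ hS I J => ?_⟩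
    have hτ0 : 0 ≤ τ / 2 := le_trans (by positivity) hηr
    rw [sub_self, abs_zero]
    exact mul_nonneg (by linarith) ((abs_nonneg _).trans (hS I J))
  · have hmaps := h.mapsTo_closedBall hδ hg hη hb hH (fun y hy => (hbd y (hxL hy)).1) hηρ
    refine ⟨hxL (hmaps ⟨zero_le_one, le_rfl⟩), fun {κ} _ _ hκ S hS I J => ?_⟩
    have hηκ : F.card * (η * (Fintype.card κ * (Q + n) * H)) ≤ τ / 2 := le_trans (by gcongr) hηr
    refine (h.abs_scaledMinor_sub_le hδ hg hη hb hLΩ (hmaps.mono_right hxL) hH hbd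
      (hηκ.trans (by linarith)) hS I J).trans ?_
    have hS0 : 0 ≤ S := (abs_nonneg _).trans (hS I J)
    gcongr
    linarith

lemma exists_scaledMinor_near_on_ccBall (h : IsInvolutiveSystem Ω X d c) (hF : ∀ l ∈ F, d l ≠ 0)
    {K : Set (Euc n)} (hK : IsCompact K) (hKΩ : K ⊆ Ω) (r : ℕ) {τ : ℝ} (hτ : 0 < τ) (hτ1 : τ ≤ 1)
    {ξ₁ : ℝ} (hξ₁ : 0 < ξ₁) :
    ∃ L, IsCompact L ∧ L ⊆ Ω ∧ ∃ ξ ∈ Ioc 0 ξ₁, ∀ x ∈ K, ∀ δ ∈ unitCube ν,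
      ∀ y ∈ CCBall (fun j : F => X j) (fun j : F => d j) Ω x (fun μ => ξ * δ μ), y ∈ L ∧
        ∀ {κ : Type} [Fintype κ] [DecidableEq κ], Fintype.card κ ≤ r →
          ∀ {S : ℝ}, (∀ (I : κ → Fin n) (J : κ → Fin Q),
            |((scaledMat X d δ x).submatrix I J).det| ≤ S) →
          ∀ (I : κ → Fin n) (J : κ → Fin Q), |((scaledMat X d δ y).submatrix I J).det -
            ((scaledMat X d δ x).submatrix I J).det| ≤ τ * S := by
  obtain ⟨ρ, hρ, hLΩ⟩ := hK.exists_cthickening_subset_open h.isOpen hKΩ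
  obtain ⟨H, hH, hbd⟩ := h.exists_bound_of_isCompact hK.cthickening hLΩ
  obtain ⟨η, hη, hηρ, hηr⟩ : ∃ η : ℝ, 0 < η ∧ F.card * (η * H) < ρ ∧
      F.card * (η * (r * (Q + n) * H)) < τ / 2 := by
    have hsmall : ∀ {A b : ℝ}, 0 < b → ∀ᶠ η in 𝓝[>] (0 : ℝ), F.card * (η * A) < b := fun hb =>
      ((show Continuous _ by fun_prop).tendsto' 0 0 (by simp)).eventually_lt_const hb
        |>.filter_mono nhdsWithin_le_nhds
    exact (eventually_mem_nhdsWithin.and ((hsmall hρ).and (hsmall (half_pos hτ)))).exists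
  obtain ⟨ξ, hξ, hξη⟩ := exists_rpow_le (p := fun l : F => ∑ μ, d l μ)
    (fun l => Fintype.sum_pos (lt_of_le_of_ne (h.degree_nonneg l) (hF l l.2).symm)) hη hξ₁
  exact ⟨cthickening ρ K, hK.cthickening, hLΩ, ξ, hξ, fun x hx δ hδ y hy =>
    h.mem_and_abs_scaledMinor_sub_le_of_mem_ccBall hδ hLΩ (closedBall_subset_cthickening hx ρ) hρ
      hH hbd hη.le hηρ hτ1 hηr.le hξ.1 hξη hy⟩

end IsInvolutiveSystem

end NearConstancy

section Control

variable {ν n Q : ℕ} {κ : Type*} [Fintype κ] [DecidableEq κ]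

/-- The minor of `δ𝐗` with rows `p.1` and columns `p.2`, as a function of the point. -/
abbrev scaledMinor (X : Fin Q → VF n) (d : Fin Q → Deg ν) (p : (κ → Fin n) × (κ → Fin Q))
    (δ : Fin ν → ℝ) (y : Euc n) : ℝ :=
  ((scaledMat X d δ y).submatrix p.1 p.2).det

/-- The algebra generated over the smooth functions on `Ω` by the quotients of the minors of `δ𝐗`
by the minor `p₀`; the parameter is `δ`. -/
abbrev minorAlgebra (Ω : Set (Euc n)) (X : Fin Q → VF n) (d : Fin Q → Deg ν)
    (p₀ : (κ → Fin n) × (κ → Fin Q)) : Subalgebra ℝ (unitCube ν → Euc n → ℝ) :=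
  quotientAlgebra Ω (fun p (θ : unitCube ν) => scaledMinor X d p θ) p₀

variable {F : Finset (Fin Q)}

/-- The coefficient of `δ^{d_l} X_l` in the expansion of `δ^{d_{l₀}} X_{l₀}` along the columns `J`
of `δ𝐗` given by Cramer's rule. -/
def controlCoeff (X : Fin Q → VF n) (d : Fin Q → Deg ν) (I : κ → Fin n) (J : κ → F) (l₀ : Fin Q)
    (l : F) (δ : Fin ν → ℝ) (y : Euc n) : ℝ :=
  ∑ j, if J j = l then scaledMinor X d (I, Function.update (fun j => (J j : Fin Q)) j l₀) δ y /
    scaledMinor X d (I, fun j => (J j : Fin Q)) δ y else 0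

lemma IsDominantMinor.smul_eq_sum_controlCoeff {X : Fin Q → VF n} {d : Fin Q → Deg ν}
    {δ : Fin ν → ℝ} {I : κ → Fin n} {J : κ → F} {y : Euc n} {C : ℝ}
    (h : IsDominantMinor (scaledMat X d δ y) I (fun j => (J j : Fin Q)) C) (l₀ : Fin Q) :
    dpow δ (d l₀) • X l₀ y =
      ∑ l : F, controlCoeff X d I J l₀ l δ y • dpow δ (d l) • X l y := by
  have hcollect : ∑ l : F, controlCoeff X d I J l₀ l δ y • dpow δ (d l) • X l y =
      ∑ j, (scaledMinor X d (I, Function.update (fun j => (J j : Fin Q)) j l₀) δ y /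
        scaledMinor X d (I, fun j => (J j : Fin Q)) δ y) • dpow δ (d (J j)) • X (J j) y := by
    simp only [controlCoeff, Finset.sum_smul, ite_smul, zero_smul]
    rw [Finset.sum_comm]
    simp
  rw [hcollect]
  ext i
  simpa [scaledMat] using h.apply_eq_sum i l₀

lemma controlCoeff_mem_minorAlgebra (Ω : Set (Euc n)) (X : Fin Q → VF n) (d : Fin Q → Deg ν)
    (I : κ → Fin n) (J : κ → F) (l₀ : Fin Q) (l : F) :
    (fun (θ : unitCube ν) y => controlCoeff X d I J l₀ l θ y) ∈
      minorAlgebra Ω X d (I, fun j => (J j : Fin Q)) := by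
  have hsum : (fun (θ : unitCube ν) y => controlCoeff X d I J l₀ l θ y) =
      ∑ j, if J j = l then fun (θ : unitCube ν) y =>
        scaledMinor X d (I, Function.update (fun j => (J j : Fin Q)) j l₀) θ y /
          scaledMinor X d (I, fun j => (J j : Fin Q)) θ y else 0 := by
    ext θ y
    simp only [controlCoeff, Finset.sum_apply]
    exact Finset.sum_congr rfl fun j _ => by split_ifs <;> rfl
  rw [hsum]
  refine sum_mem fun j _ => ?_
  split_ifs
  exacts [quotientAlgebra.quotient_mem (I, Function.update (fun j => (J j : Fin Q)) j l₀),
    zero_mem _]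

namespace IsInvolutiveSystem

variable {Ω : Set (Euc n)} {X : Fin Q → VF n} {d : Fin Q → Deg ν}
  {c : Fin Q → Fin Q → Fin Q → Euc n → ℝ}

lemma exists_bound_dpow (h : IsInvolutiveSystem Ω X d c) (k : Fin Q) :
    ∃ C, ∀ θ : unitCube ν, |dpow θ (d k)| ≤ C :=
  ⟨1, fun θ => by
    have hmem := dpow_mem_Icc_of_mem_unitCube θ.2 (h.degree_nonneg k)
    exact (abs_of_nonneg hmem.1).trans_le hmem.2⟩

lemma exists_fderiv_scaledMinor_div_eqOn (h : IsInvolutiveSystem Ω X d c)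
    (p₀ p : (κ → Fin n) × (κ → Fin Q)) (k : Fin Q) :
    ∃ g ∈ minorAlgebra Ω X d p₀, ∀ θ : unitCube ν, EqOn
      (fun y => fderiv ℝ (scaledMinor X d p θ) y (dpow θ (d k) • X k y) / scaledMinor X d p₀ θ y)
      (g θ) {y ∈ Ω | scaledMinor X d p₀ θ y ≠ 0} := by
  have hweight : ∀ j l, ∃ C, ∀ θ : unitCube ν, |bracketWeight d θ k (p.2 j) l| ≤ C := fun j l =>
    ⟨1, fun θ => (abs_of_nonneg (bracketWeight_mem_Icc θ.2 k _ l).1).trans_le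
      (bracketWeight_mem_Icc θ.2 k _ l).2⟩
  let quotient (p : (κ → Fin n) × (κ → Fin Q)) (θ : unitCube ν) (y : Euc n) : ℝ :=
    scaledMinor X d p θ y / scaledMinor X d p₀ θ y
  refine ⟨∑ j, ∑ l, (fun (θ : unitCube ν) _ => bracketWeight d θ k (p.2 j) l) *
        (fun _ => c k (p.2 j) l) * quotient (p.1, Function.update p.2 j l) +
      ∑ i, ∑ m, (fun (θ : unitCube ν) _ => dpow θ (d k)) *
        (fun _ y => jacobian (X k) y (p.1 i) m) * quotient (Function.update p.1 i m, p.2),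
    add_mem (sum_mem fun j _ => sum_mem fun l _ => ?_) (sum_mem fun i _ => sum_mem fun m _ => ?_),
    fun θ y hy => ?_⟩
  · exact mul_mem (mul_mem (quotientAlgebra.bounded_mem (hweight j l))
      (quotientAlgebra.smooth_mem (h.contDiffOn_coeff _ _ _)))
      (quotientAlgebra.quotient_mem (p.1, Function.update p.2 j l))
  · exact mul_mem (mul_mem (quotientAlgebra.bounded_mem (h.exists_bound_dpow k))
      (quotientAlgebra.smooth_mem (h.contDiffOn_jacobian k (p.1 i) m)))
      (quotientAlgebra.quotient_mem (Function.update p.1 i m, p.2))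
  · dsimp only
    rw [fderiv_det_submatrix_apply (h.differentiableAt_scaledMat θ hy.1)
      (h.fderiv_scaledMat_apply (fun μ => (θ.2 μ).1) k hy.1)]
    simp [add_div, Finset.sum_div, mul_div_assoc, structureMatrix, quotient]

lemma exists_derivList_controlCoeff_eqOn (h : IsInvolutiveSystem Ω X d c) (I : κ → Fin n)
    (J : κ → F) (l₀ : Fin Q) (l : F) (α : List F) :
    ∃ g ∈ minorAlgebra Ω X d (I, fun j => (J j : Fin Q)), ∀ θ : unitCube ν, EqOn
      (derivList (fun j : F => X j) (fun j => dpow θ (d j)) α (controlCoeff X d I J l₀ l θ)) (g θ)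
      {y ∈ Ω | scaledMinor X d (I, fun j => (J j : Fin Q)) θ y ≠ 0} := by
  refine quotientAlgebra.exists_derivList_eqOn (V := fun j : F => X j)
    (w := fun (θ : unitCube ν) (j : F) => dpow θ (d j)) h.isOpen ?_ (fun k => h.contDiffOn_field k)
    (fun k => ?_) (fun k p => ?_) (controlCoeff_mem_minorAlgebra Ω X d I J l₀ l) α
  · exact fun p θ => h.contDiffOn_scaledMinor θ p.1 p.2
  · exact h.exists_bound_dpow k
  · exact h.exists_fderiv_scaledMinor_div_eqOn _ p k

lemma continuousOn_derivList_controlCoeff (h : IsInvolutiveSystem Ω X d c) (I : κ → Fin n)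
    (J : κ → F) (l₀ : Fin Q) (l : F) (α : List F) {δ : Fin ν → ℝ} (hδ : δ ∈ unitCube ν) :
    ContinuousOn
      (derivList (fun j : F => X j) (fun j => dpow δ (d j)) α (controlCoeff X d I J l₀ l δ))
      {y ∈ Ω | scaledMinor X d (I, fun j => (J j : Fin Q)) δ y ≠ 0} := by
  obtain ⟨g, hg, heq⟩ := h.exists_derivList_controlCoeff_eqOn I J l₀ l α
  have hsmooth := quotientAlgebra.contDiffOn (v := fun p (θ : unitCube ν) => scaledMinor X d p θ)
    (fun p θ => h.contDiffOn_scaledMinor θ p.1 p.2) hg ⟨δ, hδ⟩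
  exact hsmooth.continuousOn.congr (heq ⟨δ, hδ⟩)

lemma exists_bound_derivList_controlCoeff (h : IsInvolutiveSystem Ω X d c) {K : Set (Euc n)}
    (hK : IsCompact K) (hKΩ : K ⊆ Ω) (C : ℝ) (I : κ → Fin n) (J : κ → F) (l₀ : Fin Q) (l : F)
    (α : List F) :
    ∃ B, ∀ δ ∈ unitCube ν, ∀ y ∈ K,
      IsDominantMinor (scaledMat X d δ y) I (fun j => (J j : Fin Q)) C →
      |derivList (fun j : F => X j) (fun j => dpow δ (d j)) α
        (controlCoeff X d I J l₀ l δ) y| ≤ B := by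
  obtain ⟨g, hg, heq⟩ := h.exists_derivList_controlCoeff_eqOn I J l₀ l α
  obtain ⟨B, hB⟩ := quotientAlgebra.exists_bound
    (v := fun p (θ : unitCube ν) => scaledMinor X d p θ) hK hKΩ C hg
  exact ⟨B, fun δ hδ y hy hdom => (congrArg abs (heq ⟨δ, hδ⟩ ⟨hKΩ hy, hdom.det_ne_zero⟩)).trans_le
    (hB ⟨δ, hδ⟩ y hy fun p => hdom.abs_det_div_det_le p.1 p.2)⟩

end IsInvolutiveSystem

end Control

section ControlFromDominance

variable {ν n Q : ℕ} {Ω : Set (Euc n)} {X : Fin Q → VF n} {d : Fin Q → Deg ν}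
  {c : Fin Q → Fin Q → Fin Q → Euc n → ℝ} {F : Finset (Fin Q)} {U : Set (Euc n)}

namespace IsInvolutiveSystem

lemma controlsPair_of_isDominantMinor_on_ccBall (h : IsInvolutiveSystem Ω X d c)
    {L : Set (Euc n)} (hL : IsCompact L) (hLΩ : L ⊆ Ω) (hU : IsOpen U) (h0U : (0 : Euc n) ∈ U)
    (hUΩ : U ⊆ Ω) {ξ : ℝ} (hξ : 0 < ξ)
    (hsat : ∀ x ∈ U, SatC (fun j : F => X j) (fun j : F => d j) x (vecConst ν ξ) Ω) {C : ℝ}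
    (hdom : ∀ x ∈ U, ∀ δ ∈ unitCube ν,
      ∃ q : Σ r : Fin (n + 1), (Fin r → Fin n) × (Fin r → F),
        ∀ y ∈ CCBall (fun j : F => X j) (fun j : F => d j) Ω x (fun μ => ξ * δ μ),
          y ∈ L ∧ IsDominantMinor (scaledMat X d δ y) q.2.1 (fun j => (q.2.2 j : Fin Q)) C)
    (l₀ : Fin Q) :
    ControlsPair (fun j : F => X j) (fun j : F => d j) Ω (X l₀) (d l₀) := by
  have : Nonempty (Σ r : Fin (n + 1), (Fin r → Fin n) × (Fin r → F)) :=
    ⟨⟨⟨0, n.succ_pos⟩, Fin.elim0, Fin.elim0⟩⟩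
  choose! q hqL hq using hdom
  choose B hB using fun (p : Σ r : Fin (n + 1), (Fin r → Fin n) × (Fin r → F)) (l : F)
    (α : List F) => h.exists_bound_derivList_controlCoeff hL hLΩ C p.2.1 p.2.2 l₀ l α
  refine ⟨U, ξ, hU, h0U, hUΩ, hξ, hsat,
    fun x δ l => controlCoeff X d (q x δ).2.1 (q x δ).2.2 l₀ l δ,
    fun x hx δ hδ y hy => (hq x hx δ hδ y hy).smul_eq_sum_controlCoeff l₀,
    fun x hx δ hδ l α => (h.continuousOn_derivList_controlCoeff _ _ l₀ l α hδ).mono fun y hy =>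
      ⟨hLΩ (hqL x hx δ hδ y hy), (hq x hx δ hδ y hy).det_ne_zero⟩, fun m => ?_⟩
  have : Finite {α : List F | α.length ≤ m} := List.finite_length_le F m
  obtain ⟨N, hN⟩ := (finite_range fun p : (Σ r : Fin (n + 1), (Fin r → Fin n) × (Fin r → F)) × F ×
    {α : List F | α.length ≤ m} => B p.1 p.2.1 p.2.2).bddAbove
  exact ⟨N, fun x hx δ hδ l α hα y hy => (hB (q x δ) l α δ hδ y (hqL x hx δ hδ y hy)
    (hq x hx δ hδ y hy)).trans (hN ⟨(q x δ, l, ⟨α, hα⟩), rfl⟩)⟩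

lemma exists_isDominantMinor_on_ccBall (h : IsInvolutiveSystem Ω X d c) (hF : ∀ l ∈ F, d l ≠ 0)
    {K : Set (Euc n)} (hK : IsCompact K) (hKΩ : K ⊆ Ω) (r : ℕ) {C : ℝ} (hC : 0 < C) {ξ₁ : ℝ}
    (hξ₁ : 0 < ξ₁) :
    ∃ L, IsCompact L ∧ L ⊆ Ω ∧ ∃ ξ ∈ Ioc 0 ξ₁, ∀ x ∈ K, ∀ δ ∈ unitCube ν,
      ∀ y ∈ CCBall (fun j : F => X j) (fun j : F => d j) Ω x (fun μ => ξ * δ μ), y ∈ L ∧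
        ∀ {κ : Type} [Fintype κ] [DecidableEq κ], Fintype.card κ ≤ r →
          ∀ {I : κ → Fin n} {J : κ → Fin Q}, IsDominantMinor (scaledMat X d δ x) I J C →
            IsDominantMinor (scaledMat X d δ y) I J (2 * C + 1) := by
  obtain ⟨L, hL, hLΩ, ξ, hξ, hnear⟩ := h.exists_scaledMinor_near_on_ccBall hF hK hKΩ (r + 1)
    (τ := min 1 (1 / 2 / C)) (by positivity) (min_le_left _ _) hξ₁
  refine ⟨L, hL, hLΩ, ξ, hξ, fun x hx δ hδ y hy => ?_⟩
  obtain ⟨hyL, hclose⟩ := hnear x hx δ hδ y hy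
  refine ⟨hyL, fun {κ} _ _ hκ I J hdom => hdom.of_abs_sub_le (fun I' J' => ?_) fun I' J' => ?_⟩
  · refine (hclose (hκ.trans r.le_succ) hdom.abs_det_le I' J').trans ?_
    rw [← mul_assoc]
    gcongr
    exact (le_div_iff₀ hC).1 (min_le_right _ _)
  · have hsub := hclose (κ := κ ⊕ Unit) (by simpa using hκ) (S := 0)
      (fun I J => by rw [hdom.det_eq_zero, abs_zero]) I' J'
    rwa [hdom.det_eq_zero, sub_zero, mul_zero, abs_nonpos_iff] at hsub

lemma controlsPair_of_isDominantMinor (h : IsInvolutiveSystem Ω X d c) (hF : ∀ l ∈ F, d l ≠ 0)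
    (hU : IsOpen U) (h0U : (0 : Euc n) ∈ U) (hUΩ : U ⊆ Ω) {ξ₁ : ℝ} (hξ₁ : 0 < ξ₁)
    (hsat : ∀ x ∈ U, SatC (fun j : F => X j) (fun j : F => d j) x (vecConst ν ξ₁) Ω) {C : ℝ}
    (hC : 0 < C) (hdom : ∀ x ∈ U, ∀ δ ∈ unitCube ν,
      ∃ (r : Fin (n + 1)) (I : Fin r → Fin n) (J : Fin r → F),
        IsDominantMinor (scaledMat X d δ x) I (fun j => (J j : Fin Q)) C) (l₀ : Fin Q) :
    ControlsPair (fun j : F => X j) (fun j : F => d j) Ω (X l₀) (d l₀) := by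
  obtain ⟨ρ, hρ, hρU⟩ := Metric.nhds_basis_closedBall.mem_iff.1 (hU.mem_nhds h0U)
  have hsub : ball (0 : Euc n) ρ ⊆ U := ball_subset_closedBall.trans hρU
  obtain ⟨L, hL, hLΩ, ξ, hξ, hnear⟩ := h.exists_isDominantMinor_on_ccBall hF
    (isCompact_closedBall (0 : Euc n) ρ) (hρU.trans hUΩ) n hC hξ₁
  refine h.controlsPair_of_isDominantMinor_on_ccBall hL hLΩ isOpen_ball (mem_ball_self hρ)
    (hsub.trans hUΩ) hξ.1 (fun x hx => SatC.mono (d := fun j : F => d j)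
      (fun l => Finset.sum_nonneg fun μ _ => h.degree_nonneg l μ) hξ.1 hξ.2 (hsat x (hsub hx)))
    (C := 2 * C + 1) (fun x hx δ hδ => ?_) l₀
  obtain ⟨r, I, J, hIJ⟩ := hdom x (hsub hx) δ hδ
  refine ⟨⟨r, I, J⟩, fun y hy => ?_⟩
  obtain ⟨hyL, hy_dom⟩ := hnear x (ball_subset_closedBall hx) δ hδ y hy
  exact ⟨hyL, hy_dom (by simpa using r.is_le) hIJ⟩

end IsInvolutiveSystem

lemma exists_isDominantMinor_scaledMat (X : Fin Q → VF n) (d : Fin Q → Deg ν)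
    (F : Finset (Fin Q)) {ε ξ : ℝ} (hε : 0 < ε) (hξ : 0 < ξ) :
    ∃ C > 0, ∀ (x : Euc n) (δ : Fin ν → ℝ), (∀ μ, 0 ≤ δ μ) →
      (0 < (scaledMat X d (fun μ => ξ * δ μ) x).rank →
        (scaledMat X d (fun μ => ξ * δ μ) x).rank ≤ F.card ∧
          ε * maxMinor X d (fun μ => ξ * δ μ) x (scaledMat X d (fun μ => ξ * δ μ) x).rank ≤
            maxMinorSub X d (fun μ => ξ * δ μ) x F (scaledMat X d (fun μ => ξ * δ μ) x).rank) →
      ∃ (r : Fin (n + 1)) (I : Fin r → Fin n) (J : Fin r → F),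
        IsDominantMinor (scaledMat X d δ x) I (fun j => (J j : Fin Q)) C := by
  set q : Fin Q → ℝ := fun l => ξ ^ ∑ μ, d l μ
  have hq : ∀ l, 0 < q l := fun l => Real.rpow_pos_of_pos hξ _
  obtain ⟨R, hR1, hR⟩ : ∃ R, 1 ≤ R ∧ ∀ l l', q l ≤ R * q l' := by
    obtain ⟨R, hR⟩ := (finite_range fun p : Fin Q × Fin Q => q p.1 / q p.2).bddAbove
    exact ⟨max 1 R, le_max_left _ _, fun l l' => (div_le_iff₀ (hq l')).1
      ((hR ⟨(l, l'), rfl⟩).trans (le_max_right _ _))⟩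
  have hC1 : 1 ≤ max 1 ε⁻¹ := le_max_left _ _
  refine ⟨max 1 ε⁻¹ * R ^ n, by positivity, fun x δ hδ hlarge => ?_⟩
  obtain ⟨I, J, hdom⟩ := exists_isDominantMinor (scaledMat X d (fun μ => ξ * δ μ) x) F hC1
    fun hrank => (hlarge hrank).imp_right fun hle =>
      ((le_inv_mul_iff₀ hε).2 hle).trans (mul_le_mul_of_nonneg_right (le_max_right _ _)
        (Real.iSup_nonneg fun I => Real.iSup_nonneg fun J => abs_nonneg _))
  have hrank_le := (scaledMat X d (fun μ => ξ * δ μ) x).rank_le_height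
  refine ⟨⟨_, Nat.lt_succ_of_le hrank_le⟩, I, J, ?_⟩
  simp only [scaledMat_const_mul X d hξ hδ x] at hdom
  refine (hdom.of_mul_diagonal hq hR).mono ?_
  rw [Fintype.card_fin]
  gcongr

end ControlFromDominance

theorem statement_17_general {ν n Q : ℕ} {Ω : Set (Euc n)} {X : Fin Q → VF n}
    {d : Fin Q → Deg ν} {c : Fin Q → Fin Q → Fin Q → Euc n → ℝ}
    (h : IsInvolutiveSystem Ω X d c) {F : Finset (Fin Q)} (hF : ∀ l ∈ F, d l ≠ 0)
    {ξ₁ : ℝ} (hξ₁ : 0 < ξ₁) {U : Set (Euc n)} (hU : IsOpen U) (h0U : (0 : Euc n) ∈ U)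
    (hUΩ : U ⊆ Ω)
    (hCF : ∀ x ∈ U, SatC (fun j : F => X j) (fun j : F => d j) x (vecConst ν ξ₁) Ω)
    (hnc : ∃ l, ¬ ControlsPair (fun j : F => X j) (fun j : F => d j) Ω (X l) (d l))
    {ε ξ : ℝ} (hε : 0 < ε) (hξ : 0 < ξ) :
    ∃ x ∈ U, ∃ δ : Fin ν → ℝ, (∀ μ, 0 ≤ δ μ ∧ δ μ ≤ ξ) ∧
      0 < (scaledMat X d δ x).rank ∧
      (F.card < (scaledMat X d δ x).rank ∨
        ((scaledMat X d δ x).rank ≤ F.card ∧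
          maxMinorSub X d δ x F (scaledMat X d δ x).rank <
            ε * maxMinor X d δ x (scaledMat X d δ x).rank)) := by
  by_contra! hlarge
  obtain ⟨l₀, hl₀⟩ := hnc
  obtain ⟨C, hC, hdom⟩ := exists_isDominantMinor_scaledMat X d F hε hξ
  refine hl₀ (h.controlsPair_of_isDominantMinor hF hU h0U hUΩ hξ₁ hCF hC (fun x hx δ hδ => ?_) l₀)
  refine hdom x δ (fun μ => (hδ μ).1) fun hrank => ?_
  have hδξ : ∀ μ, 0 ≤ ξ * δ μ ∧ ξ * δ μ ≤ ξ := fun μ =>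
    ⟨mul_nonneg hξ.le (hδ μ).1, mul_le_of_le_one_right hξ.le (hδ μ).2⟩
  obtain ⟨hcard, hminor⟩ := hlarge x hx _ hδξ hrank
  exact ⟨hcard, hminor hcard⟩

/-- Proposition 7.3: if some element of `(𝐗,𝐝)` is not controlled by
`ℱ`, then arbitrarily close to `0`, and for arbitrarily small `δ`, either the rank of
`δ𝐗` exceeds `|ℱ|`, or the `ℱ`-minors are `ε`-small compared with all minors. -/
theorem statement_17 {ν n Q : ℕ}
    (Ω : Set (Euc n)) (hΩ : IsOpen Ω) (h0 : (0 : Euc n) ∈ Ω)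
    (X : Fin Q → VF n) (d : Fin Q → Deg ν)
    (hd : ∀ l, (∀ μ, 0 ≤ d l μ) ∧ d l ≠ 0)
    (hXs : ∀ l, ContDiffOn ℝ (⊤ : ℕ∞) (X l) Ω)
    (hXb : ∀ l m, ∃ C : ℝ, CmSupNormOn m Ω (X l) ≤ C)
    (hbrack : ∀ l k, ∃ (c : Fin Q → Euc n → ℝ) (V : Set (Euc n)),
      IsOpen V ∧ closure Ω ⊆ V ∧ (∀ i, ContDiffOn ℝ (⊤ : ℕ∞) (c i) V) ∧
      (∀ i, ¬ (∀ μ, d i μ ≤ d l μ + d k μ) → c i = 0) ∧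
      ∀ x ∈ Ω, lieBracket (X l) (X k) x = ∑ i, c i x • X i x)
    (F : Finset (Fin Q)) (ξ₁ : ℝ) (hξ₁ : 0 < ξ₁)
    (U : Set (Euc n)) (hU : IsOpen U) (h0U : (0 : Euc n) ∈ U) (hUΩ : U ⊆ Ω)
    (hCF : ∀ x ∈ U, SatC (fun j : F => X j) (fun j : F => d j) x (vecConst ν ξ₁) Ω)
    (hCX : ∀ x ∈ U, SatC X d x (vecConst ν ξ₁) Ω)
    (hnc : ∃ l, ¬ ControlsPair (fun j : F => X j) (fun j : F => d j) Ω (X l) (d l)) :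
    ∀ ε : ℝ, 0 < ε → ε ≤ 1 → ∀ ξ : ℝ, 0 < ξ → ξ ≤ 1 →
    ∀ U' : Set (Euc n), IsOpen U' → (0 : Euc n) ∈ U' → U' ⊆ U →
    ∃ x ∈ U', ∃ δ : Fin ν → ℝ, (∀ μ, 0 ≤ δ μ ∧ δ μ ≤ ξ) ∧
      0 < (scaledMat X d δ x).rank ∧
      (F.card < (scaledMat X d δ x).rank ∨
        ((scaledMat X d δ x).rank ≤ F.card ∧
          maxMinorSub X d δ x F (scaledMat X d δ x).rank <
            ε * maxMinor X d δ x (scaledMat X d δ x).rank)) := by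
  intro ε hε _ ξ hξ _ U' hU' h0U' hU'U
  choose c V _ hΩV hcV hc0 hc using hbrack
  exact statement_17_general ⟨hΩ, fun l => (hd l).1, hXs, fun k l i =>
      (hcV k l i).mono (subset_closure.trans (hΩV k l)), hc0, hc⟩ (fun l _ => (hd l).2) hξ₁ hU' h0U'
    (hU'U.trans hUΩ) (fun x hx => hCF x (hU'U hx)) hnc hε hξ
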